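/- arXiv:2108.13652 — 2 statements merged into one kernel-verified Lean document; each statement's English description precedes it below -/
import Mathlib

section
/- Let k be an algebraically closed field of characteristic 3, let g = sl_3(k) be the Lie algebra of traceless 3×3 matrices over k, let Z(g) be its center, and let L = g/Z(g) be the 7-dimensional quotient g-module with the action induced by the adjoint action. Then H^2(g, L) = 0, H^6(g, L) = 0, and H^8(g, L) = 0. -/
/-! Chevalley–Eilenberg cohomology of a Lie algebra with coefficients in a module. -/

section ChevalleyEilenberg

variable (k : Type*) [Field k]
variable (g : Type*) [LieRing g] [LieAlgebra k g]
variable (M : Type*) [AddCommGroup M] [Module k M] [LieRingModule g M] [LieModule k g M]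

/-- The Chevalley–Eilenberg differential, as a raw function from alternating `n`-cochains
to `(n+1)`-ary functions:
`dψ(l₀,…,lₙ) = Σ_{i<j} (−1)^{i+j} ψ(⁅lᵢ,lⱼ⁆, …, l̂ᵢ, …, l̂ⱼ, …) + Σ_i (−1)^i ⁅lᵢ, ψ(…, l̂ᵢ, …)⁆`
(indices written from 0; this is the paper's formula with 1-based indices shifted by one). -/
def ceD : ∀ {n : ℕ}, (g [⋀^Fin n]→ₗ[k] M) → ((Fin (n + 1) → g) → M)
  | 0, ψ, v => ⁅v 0, ψ ![]⁆
  | (n + 1), ψ, v =>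
      (∑ i : Fin (n + 2), ∑ j : Fin (n + 2),
        if h : i < j then
          ((-1 : ℤ) ^ (i.val + j.val)) •
            ψ (Fin.cons ⁅v i, v j⁆
              (fun l => v (i.succAbove
                ((j.pred (Fin.pos_iff_ne_zero.mp (lt_of_le_of_lt i.zero_le h))).succAbove l))))
        else 0)
      + ∑ i : Fin (n + 2), ((-1 : ℤ) ^ i.val) • ⁅v i, ψ (fun l => v (i.succAbove l))⁆

variable {k g M}

private lemma dite_add_zero {P : Prop} [Decidable P] {N : Type*} [AddZeroClass N]
    (A B : P → N) :
    (dite P (fun h => A h + B h) fun _ => 0) =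
      (dite P A fun _ => 0) + (dite P B fun _ => 0) := by
  split_ifs <;> simp

private lemma dite_smul_zero {P : Prop} [Decidable P] {N : Type*} [AddCommGroup N] [Module k N]
    (c : k) (A : P → N) :
    (dite P (fun h => c • A h) fun _ => 0) = c • dite P A fun _ => 0 := by
  split_ifs <;> simp

lemma ceD_add {n : ℕ} (ψ φ : g [⋀^Fin n]→ₗ[k] M) (v : Fin (n + 1) → g) :
    ceD k g M (ψ + φ) v = ceD k g M ψ v + ceD k g M φ v := by
  cases n with
  | zero => simp [ceD]
  | succ n =>
    simp only [ceD, AlternatingMap.add_apply, smul_add, lie_add, dite_add_zero,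
      Finset.sum_add_distrib]
    abel

lemma ceD_smul {n : ℕ} (c : k) (ψ : g [⋀^Fin n]→ₗ[k] M) (v : Fin (n + 1) → g) :
    ceD k g M (c • ψ) v = c • ceD k g M ψ v := by
  cases n with
  | zero => simp [ceD]
  | succ n =>
    simp only [ceD, AlternatingMap.smul_apply, lie_smul, smul_comm _ c, dite_smul_zero,
      ← Finset.smul_sum, smul_add]

lemma ceD_zero {n : ℕ} (v : Fin (n + 1) → g) :
    ceD k g M (0 : g [⋀^Fin n]→ₗ[k] M) v = 0 := by
  cases n with
  | zero => simp [ceD]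
  | succ n => simp [ceD]

variable (k g M)

/-- The space of Chevalley–Eilenberg `n`-cocycles `Zⁿ(g, M)`. -/
def ceZ (n : ℕ) : Submodule k (g [⋀^Fin n]→ₗ[k] M) where
  carrier := {ψ | ∀ v, ceD k g M ψ v = 0}
  add_mem' := by
    intro ψ φ hψ hφ v
    rw [ceD_add, hψ v, hφ v, add_zero]
  zero_mem' := fun v => ceD_zero v
  smul_mem' := by
    intro c ψ hψ v
    rw [ceD_smul, hψ v, smul_zero]

/-- The space of Chevalley–Eilenberg `n`-coboundaries `Bⁿ(g, M)`: in positive degree, the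
alternating `n`-cochains that agree (as functions) with `dφ` for some `(n-1)`-cochain `φ`. -/
def ceB : (n : ℕ) → Submodule k (g [⋀^Fin n]→ₗ[k] M)
  | 0 => ⊥
  | (n + 1) =>
      { carrier := {ψ | ∃ φ : g [⋀^Fin n]→ₗ[k] M, ∀ v, ψ v = ceD k g M φ v}
        add_mem' := by
          rintro ψ χ ⟨φ₁, h₁⟩ ⟨φ₂, h₂⟩
          exact ⟨φ₁ + φ₂, fun v => by
            rw [AlternatingMap.add_apply, h₁ v, h₂ v, ceD_add]⟩
        zero_mem' := ⟨0, fun v => by rw [AlternatingMap.zero_apply, ceD_zero]⟩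
        smul_mem' := by
          rintro c ψ ⟨φ, h⟩
          exact ⟨c • φ, fun v => by rw [AlternatingMap.smul_apply, h v, ceD_smul]⟩ }

/-- The `n`-th Chevalley–Eilenberg cohomology space `Hⁿ(g, M)`: the quotient of the space of
`n`-cocycles by the space of `n`-coboundaries (viewed inside the cocycles). -/
abbrev ceH (n : ℕ) : Type _ :=
  ↥(ceZ k g M n) ⧸ (ceB k g M n).comap (ceZ k g M n).subtype

end ChevalleyEilenberg

/-- The Lie algebra `sl₃(k)` of traceless `3 × 3` matrices over `k`. -/
abbrev sl3 (k : Type*) [Field k] := ↥(LieAlgebra.SpecialLinear.sl (Fin 3) k)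

/-- The quotient `sl₃(k)/Z(sl₃(k))` of `sl₃(k)` by its center, as a module over `sl₃(k)`
via the action induced by the adjoint action. -/
abbrev sl3ModCenter (k : Type*) [Field k] := (sl3 k) ⧸ LieAlgebra.center k (sl3 k)

/-! A cochain is determined by its coordinates on increasing wedges of basis vectors, and in these
coordinates the complex `C^•(g, M)` becomes a finite complex whose differential is written in terms
of structure constants. For `sl₃` and its quotient by the center these are integers modulo `3`, so
that exactness is a question about matrices over `𝔽₃`; moreover the differential preserves weights
for the diagonal torus, which splits these matrices into small blocks. In each block, Gaussian
elimination solves the equations `dh = f` for the coordinates of `h`, up to linear conditions on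
`f`, and a second elimination shows that these conditions follow from `df = 0`. The elimination is
correct over every ring of characteristic `3`, hence gives the vanishing over every field of
characteristic `3`. -/

/-- Formal `ℤ`-linear combinations of elements of `α`, as lists of terms `(x, a)` standing for
`a • x`. Lists, unlike finitely supported functions, are cheap to compute with in the kernel. -/
abbrev FormalSum (α : Type*) := List (α × ℤ)

namespace FormalSum

section Linear

variable {α β M N : Type*} [AddCommGroup M] [AddCommGroup N]

/-- The value of a formal sum under the linear extension of `f`. -/
def eval (f : α → M) (s : FormalSum α) : M := (s.map fun t => t.2 • f t.1).sum

/-- The multiple `a • s`. -/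
def scale (a : ℤ) (s : FormalSum α) : FormalSum α := s.map fun t => (t.1, a * t.2)

/-- The image of a formal sum under the linear extension of a map of basis elements. -/
def relabel (h : α → β) (s : FormalSum α) : FormalSum β := s.map fun t => (h t.1, t.2)

/-- The image of a formal sum under the linear extension of `h`. -/
def bind (h : α → FormalSum β) (s : FormalSum α) : FormalSum β :=
  s.flatMap fun t => scale t.2 (h t.1)

lemma eval_nil (f : α → M) : eval f [] = 0 := rfl

lemma eval_cons (f : α → M) (t : α × ℤ) (s : FormalSum α) :
    eval f (t :: s) = t.2 • f t.1 + eval f s := by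
  simp only [eval, List.map_cons, List.sum_cons]

lemma eval_append (f : α → M) (s s' : FormalSum α) :
    eval f (s ++ s') = eval f s + eval f s' := by
  simp only [eval, List.map_append, List.sum_append]

lemma eval_scale (f : α → M) (a : ℤ) (s : FormalSum α) : eval f (scale a s) = a • eval f s := by
  simp only [eval, scale, List.map_map, List.smul_sum, Function.comp_def, mul_smul]

lemma eval_relabel (f : β → M) (h : α → β) (s : FormalSum α) :
    eval f (relabel h s) = eval (fun x => f (h x)) s := by
  simp only [eval, relabel, List.map_map, Function.comp_def]

lemma eval_flatMap (f : α → M) (l : List β) (s : β → FormalSum α) :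
    eval f (l.flatMap s) = (l.map fun y => eval f (s y)).sum := by
  induction l with
  | nil => rfl
  | cons y l ih => simp only [List.flatMap_cons, eval_append, ih, List.map_cons, List.sum_cons]

lemma eval_bind (f : β → M) (h : α → FormalSum β) (s : FormalSum α) :
    eval f (bind h s) = eval (fun x => eval f (h x)) s := by
  simp only [bind, eval_flatMap, eval_scale]
  rfl

lemma map_eval {F : Type*} [FunLike F M N] [AddMonoidHomClass F M N] (φ : F) (f : α → M)
    (s : FormalSum α) : φ (eval f s) = eval (fun x => φ (f x)) s := by
  simp only [eval, map_list_sum, List.map_map, Function.comp_def, map_zsmul]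

lemma eval_congr {f g : α → M} {s : FormalSum α} (h : ∀ t ∈ s, f t.1 = g t.1) :
    eval f s = eval g s := by
  simp only [eval]
  exact congrArg List.sum (List.map_congr_left fun t ht => by rw [h t ht])

/-- The formal sum `∑ l, c l • l`, without its zero terms. -/
def ofFn {n : ℕ} (c : Fin n → ℤ) : FormalSum (Fin n) :=
  ((List.finRange n).map fun l => (l, c l)).filter fun t => t.2 ≠ 0

lemma eval_filter_ne_zero (f : α → M) (s : FormalSum α) :
    eval f (s.filter fun t => t.2 ≠ 0) = eval f s := by
  induction s with
  | nil => rfl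
  | cons t s ih =>
    rw [List.filter_cons, eval_cons]
    split_ifs with h
    · rw [eval_cons, ih]
    · rw [ih, of_not_not (decide_eq_true_iff.not.mp h), zero_smul, zero_add]

lemma eval_ofFn {n : ℕ} (f : Fin n → M) (c : Fin n → ℤ) : eval f (ofFn c) = ∑ l, c l • f l := by
  rw [ofFn, eval_filter_ne_zero, eval, List.map_map, Fin.sum_univ_def]
  rfl

lemma eval_range_flatMap (f : α → M) (n : ℕ) (s : ℕ → FormalSum α) :
    eval f ((List.range n).flatMap s) = ∑ i : Fin n, eval f (s i) := by
  rw [eval_flatMap, ← Finset.sum_range fun i => eval f (s i)]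
  rfl

end Linear

section Modular

variable {α : Type*} [DecidableEq α]

/-- `addTerm p x a s` adds `a • x` to `s`, reducing the coefficient of `x` modulo `p`. -/
def addTerm (p : ℕ) (x : α) (a : ℤ) : FormalSum α → FormalSum α
  | [] => match a % p with
    | 0 => []
    | b => [(x, b)]
  | t :: s =>
    if x = t.1 then
      match (a + t.2) % p with
      | 0 => s
      | b => (x, b) :: s
    else t :: addTerm p x a s

/-- Collects equal terms, with coefficients modulo `p`. -/
def collect (p : ℕ) (s : FormalSum α) : FormalSum α := s.foldr (fun t => addTerm p t.1 t.2) []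

/-- The total coefficient of `x`. -/
def coeff (x : α) : FormalSum α → ℤ
  | [] => 0
  | t :: s => if x = t.1 then t.2 + coeff x s else coeff x s

/-- A rewriting rule `x ↦ s` on formal sums. -/
abbrev Rule (α : Type*) := α × FormalSum α

/-- Replaces `x` by `s` in a formal sum, where `x ↦ s` is the rule `r`. -/
def substitute (p : ℕ) (r : Rule α) (v : FormalSum α) : FormalSum α :=
  match coeff r.1 v with
  | 0 => v
  | a => r.2.foldr (fun t => addTerm p t.1 (a * t.2)) (v.filter fun t => r.1 ≠ t.1)

/-- Applies a list of rules, starting with the last one. -/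
def reduce (p : ℕ) (E : List (Rule α)) (v : FormalSum α) : FormalSum α :=
  E.foldr (substitute p) v

/-- Gaussian elimination over `𝔽_p`: turns relations `v = 0` into rules, by solving for an element
satisfying `isPivot`. By Fermat, `a ^ (p - 2)` inverts a leading coefficient `a`. -/
def echelon (p : ℕ) (isPivot : α → Bool) : List (FormalSum α) → List (Rule α)
  | [] => []
  | v :: vs =>
    let E := echelon p isPivot vs
    let w := reduce p E v
    match w.find? fun t => isPivot t.1 with
    | none => E
    | some t => (t.1, collect p ((t.1, 1) :: scale (-t.2 ^ (p - 2)) w)) :: E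

/-- The modification of `f` at the left sides of a list of rules which makes `reduce` preserve
values. -/
def solve {M : Type*} [AddCommGroup M] (f : α → M) : List (Rule α) → α → M
  | [] => f
  | r :: E => solve (Function.update f r.1 (eval f r.2)) E

variable {R : Type*} [Ring R] {p : ℕ} [CharP R p]

lemma emod_zsmul (a : ℤ) (r : R) : (a % p) • r = a • r := by
  rw [zsmul_eq_mul, zsmul_eq_mul, ← CharP.intCast_eq_intCast_mod R p]

lemma eval_addTerm (f : α → R) (x : α) (a : ℤ) (s : FormalSum α) :
    eval f (addTerm p x a s) = a • f x + eval f s := by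
  induction s with
  | nil =>
    rw [← emod_zsmul (p := p) a, addTerm]
    split
    next h => rw [h, zero_smul, zero_add]
    next => rw [eval_cons]
  | cons t s ih =>
    rw [addTerm, eval_cons]
    by_cases h : x = t.1
    · rw [if_pos h, ← h, ← add_assoc, ← add_smul, ← emod_zsmul (p := p) (a + t.2)]
      split
      next h => rw [h, zero_smul, zero_add]
      next => rw [eval_cons]
    · rw [if_neg h, eval_cons, ih, add_left_comm]

lemma eval_foldr_addTerm (f : α → R) (b : ℤ) (s v : FormalSum α) :
    eval f (s.foldr (fun t => addTerm p t.1 (b * t.2)) v) = b • eval f s + eval f v := by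
  induction s with
  | nil => rw [List.foldr_nil, eval_nil, smul_zero, zero_add]
  | cons t s ih => rw [List.foldr_cons, eval_addTerm, ih, eval_cons, smul_add, mul_smul, add_assoc]

lemma eval_collect (f : α → R) (s : FormalSum α) : eval f (collect p s) = eval f s := by
  simpa only [collect, one_mul, one_smul, eval_nil, add_zero] using
    eval_foldr_addTerm (p := p) f 1 s []

lemma eval_eq_coeff_add {M : Type*} [AddCommGroup M] (f : α → M) (x : α) (v : FormalSum α) :
    eval f v = coeff x v • f x + eval f (v.filter fun t => x ≠ t.1) := by
  induction v with
  | nil => rw [coeff, List.filter_nil, zero_smul, zero_add]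
  | cons t v ih =>
    rw [coeff, List.filter_cons, eval_cons, ih]
    by_cases h : x = t.1
    · simp only [h, if_true, ne_eq, not_true_eq_false, decide_false, Bool.false_eq_true, if_false,
        add_smul, add_assoc]
    · simp only [h, if_false, ne_eq, not_false_eq_true, decide_true, if_true, eval_cons]
      abel

lemma eval_update_filter {M : Type*} [AddCommGroup M] (f : α → M) (x : α) (y : M)
    (v : FormalSum α) : eval (Function.update f x y) (v.filter fun t => x ≠ t.1) =
      eval f (v.filter fun t => x ≠ t.1) :=
  eval_congr fun _ ht =>
    Function.update_of_ne (Ne.symm (of_decide_eq_true (List.mem_filter.mp ht).2)) _ _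

lemma eval_substitute (f : α → R) (r : Rule α) (v : FormalSum α) :
    eval f (substitute p r v) = eval (Function.update f r.1 (eval f r.2)) v := by
  rw [eval_eq_coeff_add (Function.update f r.1 _) r.1 v, Function.update_self, eval_update_filter,
    substitute]
  split
  next h => rw [eval_eq_coeff_add f r.1 v, h, zero_smul, zero_smul]
  next => rw [eval_foldr_addTerm]

lemma eval_reduce (f : α → R) (E : List (Rule α)) (v : FormalSum α) :
    eval f (reduce p E v) = eval (solve f E) v := by
  induction E generalizing f with
  | nil => rfl
  | cons r E ih => exact (eval_substitute f r _).trans (ih _)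

lemma solve_eq_self {M : Type*} [AddCommGroup M] {f : α → M} {E : List (Rule α)}
    (hE : ∀ r ∈ E, eval f r.2 = f r.1) : solve f E = f := by
  induction E with
  | nil => rfl
  | cons r E ih =>
    rw [List.forall_mem_cons] at hE
    rw [solve, hE.1, Function.update_eq_self, ih hE.2]

lemma solve_apply_of_forall_ne {M : Type*} [AddCommGroup M] (f : α → M) {E : List (Rule α)} {x : α}
    (hE : ∀ r ∈ E, r.1 ≠ x) : solve f E x = f x := by
  induction E generalizing f with
  | nil => rfl
  | cons r E ih =>
    rw [List.forall_mem_cons] at hE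
    rw [solve, ih _ hE.2, Function.update_of_ne hE.1.symm]

lemma isPivot_of_mem_echelon {isPivot : α → Bool} {vs : List (FormalSum α)} {r : Rule α}
    (hr : r ∈ echelon p isPivot vs) : isPivot r.1 := by
  induction vs with
  | nil => exact absurd hr List.not_mem_nil
  | cons v vs ih =>
    rw [echelon] at hr
    split at hr
    · exact ih hr
    next t ht =>
      obtain rfl | hr := List.mem_cons.mp hr
      · exact List.find?_some (p := fun t : α × ℤ => isPivot t.1) ht
      · exact ih hr

lemma eval_of_mem_echelon {f : α → R} {isPivot : α → Bool} {vs : List (FormalSum α)}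
    (hvs : ∀ v ∈ vs, eval f v = 0) {r : Rule α} (hr : r ∈ echelon p isPivot vs) :
    eval f r.2 = f r.1 := by
  induction vs generalizing r with
  | nil => exact absurd hr List.not_mem_nil
  | cons v vs ih =>
    rw [List.forall_mem_cons] at hvs
    rw [echelon] at hr
    split at hr
    · exact ih hvs.2 hr
    · obtain rfl | hr := List.mem_cons.mp hr
      · rw [eval_collect, eval_cons, eval_scale, eval_reduce, solve_eq_self fun r => ih hvs.2,
          hvs.1, smul_zero, add_zero, one_smul]
      · exact ih hvs.2 hr

end Modular

end FormalSum

namespace ChevalleyEilenberg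

section Differential

variable {k : Type*} [Field k] {g : Type*} [LieRing g] [LieAlgebra k g]
variable {M : Type*} [AddCommGroup M] [Module k M]

/-- The bilinear map `(x, y) ↦ φ(⁅x, y⁆, ·)`, whose alternatization is the bracket part of `dφ`. -/
def curryBracket {n : ℕ} (φ : g [⋀^Fin (n + 1)]→ₗ[k] M) : g →ₗ[k] g →ₗ[k] g [⋀^Fin n]→ₗ[k] M :=
  (LieAlgebra.ad k g : g →ₗ[k] Module.End k g).compr₂ φ.curryLeft

lemma curryBracket_apply {n : ℕ} (φ : g [⋀^Fin (n + 1)]→ₗ[k] M) (x y : g) (v : Fin n → g) :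
    curryBracket φ x y v = φ (Fin.cons ⁅x, y⁆ v) := rfl

lemma curryBracket_swap {n : ℕ} (φ : g [⋀^Fin (n + 1)]→ₗ[k] M) (x y : g) :
    curryBracket φ y x = -curryBracket φ x y := by
  change φ.curryLeft ⁅y, x⁆ = -φ.curryLeft ⁅x, y⁆
  rw [← lie_skew, map_neg]

lemma alternatize_curryBracket {n : ℕ} (φ : g [⋀^Fin (n + 1)]→ₗ[k] M) (v : Fin (n + 2) → g) :
    AlternatingMap.alternatizeUncurryFin
        (AlternatingMap.alternatizeUncurryFinLM ∘ₗ curryBracket φ) v =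
      (-2 : ℤ) • ∑ i : Fin (n + 2), ∑ j : Fin (n + 2),
        if h : i < j then
          ((-1 : ℤ) ^ (i.val + j.val)) •
            φ (Fin.cons ⁅v i, v j⁆
              (fun l => v (i.succAbove
                ((j.pred (Fin.pos_iff_ne_zero.mp (lt_of_le_of_lt i.zero_le h))).succAbove l))))
        else 0 := by
  rw [AlternatingMap.alternatizeUncurryFin_alternatizeUncurryFinLM_comp_apply,
    Fin.sum_univ_castSucc (n := n + 1), Finset.sum_eq_zero (s := Finset.univ)
      (f := fun j : Fin (n + 2) => if h : Fin.last (n + 1) < j then _ else (0 : M))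
      fun j _ => dif_neg (Fin.le_last j).not_gt, add_zero, Finset.smul_sum]
  refine Finset.sum_congr rfl fun i _ => ?_
  rw [Fin.sum_univ_succ, dif_neg (Fin.not_lt_zero _), zero_add, Finset.smul_sum]
  refine Finset.sum_subset_zero_on_sdiff (Finset.subset_univ _) (fun j hj => ?_) fun j hj => ?_
  · rw [dif_neg (by simpa using hj), smul_zero]
  · rw [dif_pos (by simpa [Fin.castSucc_lt_succ_iff] using hj), curryBracket_swap φ (v i.castSucc),
      AlternatingMap.neg_apply, sub_neg_eq_add, ← two_smul ℤ, Fin.val_castSucc, Fin.val_succ,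
      ← add_assoc, pow_succ, smul_smul, smul_smul, curryBracket_apply]
    congr 1
    ring

variable [LieRingModule g M] [LieModule k g M]

/-- The linear map `x ↦ x • φ(·)`, whose alternatization is the action part of `dφ`. -/
def curryAction {n : ℕ} (φ : g [⋀^Fin n]→ₗ[k] M) : g →ₗ[k] g [⋀^Fin n]→ₗ[k] M where
  toFun x := (LieModule.toEnd k g M x).compAlternatingMap φ
  map_add' x y := by
    ext v
    simp only [map_add, LinearMap.compAlternatingMap_apply, LinearMap.add_apply,
      AlternatingMap.add_apply]
  map_smul' c x := by
    ext v
    simp only [map_smul, LinearMap.compAlternatingMap_apply, LinearMap.smul_apply,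
      AlternatingMap.smul_apply, RingHom.id_apply]

-- Alternatizing the bracket counts every pair `i < j` twice.
lemma exists_alternatingMap_eq_ceD (h2 : (2 : k) ≠ 0) {n : ℕ} (φ : g [⋀^Fin (n + 1)]→ₗ[k] M) :
    ∃ ω : g [⋀^Fin (n + 2)]→ₗ[k] M, ∀ v, ω v = ceD k g M φ v := by
  refine ⟨(-2 : k)⁻¹ • AlternatingMap.alternatizeUncurryFin
    (AlternatingMap.alternatizeUncurryFinLM ∘ₗ curryBracket φ) +
    AlternatingMap.alternatizeUncurryFin (curryAction φ), fun v => ?_⟩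
  rw [AlternatingMap.add_apply, AlternatingMap.smul_apply, alternatize_curryBracket,
    AlternatingMap.alternatizeUncurryFin_apply, ← Int.cast_smul_eq_zsmul k (-2), smul_smul,
    Int.cast_neg, Int.cast_ofNat, inv_mul_cancel₀ (neg_ne_zero.mpr h2), one_smul]
  rfl

end Differential

section Wedge

variable {ι : Type*} [LinearOrder ι]

/-- The normal form of `x_p ∧ x_T`, for `T` increasing, as a signed increasing wedge. -/
def wedgeCons (p : ι) : List ι → FormalSum (List ι)
  | [] => [([p], 1)]
  | q :: T =>
    if p < q then [(p :: q :: T, 1)]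
    else if p = q then []
    else FormalSum.scale (-1) (FormalSum.relabel (q :: ·) (wedgeCons p T))

lemma perm_of_mem_wedgeCons {p : ι} {T : List ι} {t : List ι × ℤ} (ht : t ∈ wedgeCons p T) :
    t.1.Perm (p :: T) := by
  induction T generalizing t with
  | nil =>
    rw [wedgeCons, List.mem_singleton] at ht
    rw [ht]
  | cons q T ih =>
    rw [wedgeCons] at ht
    split_ifs at ht with hlt heq
    · rw [List.mem_singleton] at ht
      rw [ht]
    · exact absurd ht List.not_mem_nil
    · simp only [FormalSum.scale, FormalSum.relabel, List.mem_map] at ht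
      obtain ⟨_, ⟨u, hu, rfl⟩, rfl⟩ := ht
      exact ((ih hu).cons q).trans (List.Perm.swap p q T)

lemma pairwise_of_mem_wedgeCons {p : ι} {T : List ι} (hT : T.Pairwise (· < ·)) {t : List ι × ℤ}
    (ht : t ∈ wedgeCons p T) : t.1.Pairwise (· < ·) := by
  induction T generalizing t with
  | nil =>
    rw [wedgeCons, List.mem_singleton] at ht
    rw [ht]
    exact List.pairwise_singleton _ _
  | cons q T ih =>
    rw [List.pairwise_cons] at hT
    rw [wedgeCons] at ht
    split_ifs at ht with hlt heq
    · rw [List.mem_singleton] at ht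
      rw [ht]
      refine List.pairwise_cons.mpr ⟨?_, List.pairwise_cons.mpr hT⟩
      exact List.forall_mem_cons.mpr ⟨hlt, fun r hr => hlt.trans (hT.1 r hr)⟩
    · exact absurd ht List.not_mem_nil
    · simp only [FormalSum.scale, FormalSum.relabel, List.mem_map] at ht
      obtain ⟨_, ⟨u, hu, rfl⟩, rfl⟩ := ht
      refine List.pairwise_cons.mpr ⟨fun r hr => ?_, ih hT.2 hu⟩
      obtain rfl | hr := List.mem_cons.mp ((perm_of_mem_wedgeCons hu).mem_iff.mp hr)
      · exact lt_of_le_of_ne (not_lt.mp hlt) (Ne.symm heq)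
      · exact hT.1 r hr

lemma exists_ofFn_eq_of_pairwise_lt {n : ℕ} {T : List ι} (hT : T.Pairwise (· < ·))
    (hn : T.length = n) : ∃ f : Fin n ↪o ι, List.ofFn f = T := by
  subst hn
  exact ⟨OrderEmbedding.ofStrictMono T.get fun i j hij =>
    List.pairwise_iff_getElem.mp hT i j i.2 j.2 hij, List.ofFn_get T⟩

end Wedge

section Basis

variable {k g M : Type*} [Field k] [AddCommGroup g] [Module k g] [AddCommGroup M] [Module k M]

lemma curryLeft_swap {n : ℕ} (ψ : g [⋀^Fin (n + 2)]→ₗ[k] M) (u v : g) :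
    (ψ.curryLeft u).curryLeft v = -(ψ.curryLeft v).curryLeft u := by
  have h := AlternatingMap.curryLeft_same ψ (u + v)
  simp only [map_add, AlternatingMap.curryLeft_add, LinearMap.add_apply,
    AlternatingMap.curryLeft_same, zero_add, add_zero] at h
  exact eq_neg_of_add_eq_zero_right h

lemma map_cons_eval {α : Type*} {n : ℕ} (φ : g [⋀^Fin (n + 1)]→ₗ[k] M) (v : Fin n → g) (f : α → g)
    (s : FormalSum α) :
    φ (Fin.cons (FormalSum.eval f s) v) = FormalSum.eval (fun a => φ (Fin.cons (f a) v)) s :=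
  FormalSum.map_eval (AddMonoidHom.mk' (fun u => φ.curryLeft u v) fun u u' => by
    rw [map_add, AlternatingMap.add_apply]) f s

variable {ι : Type*} [Inhabited ι]

/-- The tuple of basis vectors with indices `T`. Entries beyond the end of `T` are junk. -/
noncomputable def basisTuple (x : Module.Basis ι k g) (n : ℕ) (T : List ι) : Fin n → g :=
  fun i => x (T.getD i default)

lemma basisTuple_ofFn (x : Module.Basis ι k g) {n : ℕ} (f : Fin n → ι) :
    basisTuple x n (List.ofFn f) = x ∘ f := by
  ext i
  simp [basisTuple]

lemma basisTuple_cons (x : Module.Basis ι k g) (n : ℕ) (p : ι) (T : List ι) :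
    basisTuple x (n + 1) (p :: T) = Fin.cons (x p) (basisTuple x n T) := by
  ext i
  cases i using Fin.cases <;> simp [basisTuple]

lemma basisTuple_eraseIdx (x : Module.Basis ι k g) {n : ℕ} (T : List ι) (i : Fin (n + 1)) :
    basisTuple x n (T.eraseIdx i) = fun l => basisTuple x (n + 1) T (i.succAbove l) := by
  ext l
  simp only [basisTuple, List.getD_eq_getElem?_getD, List.getElem?_eraseIdx, Fin.succAbove,
    Fin.lt_def, Fin.val_castSucc]
  split_ifs <;> simp

variable [LinearOrder ι]

lemma exists_alternatingMap_basisTuple (x : Module.Basis ι k g) (n : ℕ) (val : List ι → M) :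
    ∃ φ : g [⋀^Fin n]→ₗ[k] M, ∀ T : List ι, T.Pairwise (· < ·) → T.length = n →
      φ (basisTuple x n T) = val T := by
  refine ⟨exteriorPower.alternatingMapLinearEquiv.symm ((x.exteriorPower n).constr k
    fun s => val (List.ofFn (Set.powersetCard.ofFinEmbEquiv.symm s))), fun T hT hn => ?_⟩
  obtain ⟨f, rfl⟩ := exists_ofFn_eq_of_pairwise_lt hT hn
  have h : exteriorPower.ιMulti k n (x ∘ f) =
      x.exteriorPower n (Set.powersetCard.ofFinEmbEquiv f) := by
    rw [exteriorPower.basis_apply, exteriorPower.ιMulti_family, Equiv.symm_apply_apply]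
  rw [basisTuple_ofFn, exteriorPower.alternatingMapLinearEquiv_symm_apply,
    LinearMap.compAlternatingMap_apply, h, Module.Basis.constr_basis, Equiv.symm_apply_apply]

lemma alternatingMap_ext_basisTuple (x : Module.Basis ι k g) {n : ℕ} {φ ψ : g [⋀^Fin n]→ₗ[k] M}
    (h : ∀ T : List ι, T.Pairwise (· < ·) → T.length = n →
      φ (basisTuple x n T) = ψ (basisTuple x n T)) : φ = ψ := by
  apply exteriorPower.alternatingMapLinearEquiv.injective
  refine (x.exteriorPower n).ext fun s => ?_
  have hs := h (List.ofFn (Set.powersetCard.ofFinEmbEquiv.symm s))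
    (List.pairwise_ofFn.mpr fun i j hij => (OrderEmbedding.lt_iff_lt _).mpr hij) List.length_ofFn
  rw [basisTuple_ofFn] at hs
  rw [exteriorPower.basis_apply, exteriorPower.ιMulti_family,
    exteriorPower.alternatingMapLinearEquiv_apply_ιMulti,
    exteriorPower.alternatingMapLinearEquiv_apply_ιMulti, hs]

lemma map_cons_basisTuple (x : Module.Basis ι k g) {n : ℕ} (ψ : g [⋀^Fin (n + 1)]→ₗ[k] M) (p : ι)
    {T : List ι} (hn : T.length = n) : ψ (Fin.cons (x p) (basisTuple x n T)) =
      FormalSum.eval (fun S => ψ (basisTuple x (n + 1) S)) (wedgeCons p T) := by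
  induction T generalizing n with
  | nil => simp only [wedgeCons, FormalSum.eval_cons, FormalSum.eval_nil, basisTuple_cons,
      one_smul, add_zero]
  | cons q T ih =>
    obtain ⟨n, rfl⟩ : ∃ m, n = m + 1 := ⟨T.length, hn.symm⟩
    have hcurry (r s : ι) (S : List ι) :
        ψ (Fin.cons (x r) (basisTuple x (n + 1) (s :: S))) =
          (ψ.curryLeft (x r)).curryLeft (x s) (basisTuple x n S) := by
      rw [basisTuple_cons]
      rfl
    rw [wedgeCons]
    split_ifs with hlt heq
    · simp only [FormalSum.eval_cons, FormalSum.eval_nil, basisTuple_cons, one_smul, add_zero]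
    · rw [hcurry, heq, AlternatingMap.curryLeft_same]
      rfl
    · have hswap : ψ (Fin.cons (x p) (basisTuple x (n + 1) (q :: T))) =
          -ψ (Fin.cons (x q) (basisTuple x (n + 1) (p :: T))) := by
        rw [hcurry, hcurry]
        exact DFunLike.congr_fun (curryLeft_swap ψ (x p) (x q)) _
      rw [hswap, basisTuple_cons, FormalSum.eval_scale, FormalSum.eval_relabel, neg_one_smul]
      exact congrArg Neg.neg ((ih (ψ.curryLeft (x q)) (by simpa using hn)).trans
        (by simp only [basisTuple_cons]; rfl))

end Basis

/-- Structure constants of a Lie algebra with basis `x` indexed by `ι` acting on a module with basis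
`m` indexed by `κ`: `bracket i j` is `⁅x_i, x_j⁆`, and `action i l` is the `l`-th coordinate of
`⁅x_i, ·⁆` as a combination of coordinates, that is, a row of the matrix of `x_i`. -/
structure StructureConstants (ι κ : Type*) where
  bracket : ι → ι → FormalSum ι
  action : ι → κ → FormalSum κ

/-- `(T, l)` stands for the linear form `φ ↦ m_l^*(φ(x_T))` on cochains. -/
abbrev Cell (ι κ : Type*) := List ι × κ

namespace StructureConstants

section Boundary

variable {ι κ : Type*} [LinearOrder ι] [Inhabited ι] (C : StructureConstants ι κ)

/-- The transpose of the differential: `φ ↦ m_l^*(dφ(x_T))` in terms of the forms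
`φ ↦ m_q^*(φ(x_S))`. -/
def boundary (c : Cell ι κ) : FormalSum (Cell ι κ) :=
  ((List.range c.1.length).flatMap fun i => (List.range c.1.length).flatMap fun j =>
    if i < j then
      FormalSum.scale ((-1) ^ (i + j)) (FormalSum.relabel (·, c.2) (FormalSum.bind
        (fun p => wedgeCons p ((c.1.eraseIdx i).eraseIdx (j - 1)))
        (C.bracket (c.1.getD i default) (c.1.getD j default))))
    else []) ++
  (List.range c.1.length).flatMap fun i =>
    FormalSum.scale ((-1) ^ i)
      (FormalSum.relabel (c.1.eraseIdx i, ·) (C.action (c.1.getD i default) c.2))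

lemma length_eraseIdx_eraseIdx {α : Type*} {T : List α} {n : ℕ} (hn : T.length = n + 2) {i j : ℕ}
    (hij : i < j) (hj : j < n + 2) : ((T.eraseIdx i).eraseIdx (j - 1)).length = n := by
  rw [List.length_eraseIdx_of_lt, List.length_eraseIdx_of_lt] <;>
    grind [List.length_eraseIdx_of_lt]

lemma boundary_keys {n : ℕ} {c : Cell ι κ} (hc : c.1.Pairwise (· < ·)) (hn : c.1.length = n + 1)
    {t : Cell ι κ × ℤ} (ht : t ∈ C.boundary c) :
    t.1.1.Pairwise (· < ·) ∧ t.1.1.length = n := by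
  simp only [boundary, FormalSum.scale, FormalSum.relabel, FormalSum.bind, List.mem_append,
    List.mem_flatMap, List.mem_range, List.mem_map, hn] at ht
  rcases ht with ⟨i, hi, j, hj, ht⟩ | ⟨i, hi, _, ⟨_, _, rfl⟩, rfl⟩
  · split_ifs at ht with hij
    · simp only [List.mem_map, List.mem_flatMap] at ht
      obtain ⟨_, ⟨_, ⟨_, _, w, hw, rfl⟩, rfl⟩, rfl⟩ := ht
      refine ⟨pairwise_of_mem_wedgeCons (hc.sublist
        ((List.eraseIdx_sublist _ _).trans (List.eraseIdx_sublist _ _))) hw, ?_⟩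
      obtain ⟨n, rfl⟩ : ∃ m, n = m + 1 := ⟨n - 1, by omega⟩
      rw [(perm_of_mem_wedgeCons hw).length_eq, List.length_cons,
        length_eraseIdx_eraseIdx hn hij hj]
    · exact absurd ht List.not_mem_nil
  · refine ⟨hc.sublist (List.eraseIdx_sublist _ _), ?_⟩
    rw [List.length_eraseIdx_of_lt (hn ▸ hi), hn, Nat.add_sub_cancel]

end Boundary

section Represents

variable {ι κ k g M : Type*} [Field k] [LieRing g] [LieAlgebra k g]
variable [AddCommGroup M] [Module k M] [LieRingModule g M]

/-- `C` consists of the structure constants of `g` and `M` in the bases `x` and `m`. -/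
structure Represents (C : StructureConstants ι κ) (x : Module.Basis ι k g)
    (m : Module.Basis κ k M) : Prop where
  lie_eq (i j : ι) : ⁅x i, x j⁆ = FormalSum.eval x (C.bracket i j)
  coord_lie (i : ι) (l : κ) (w : M) :
    m.coord l ⁅x i, w⁆ = FormalSum.eval (fun q => m.coord q w) (C.action i l)

/-- The values `m_l^*(φ(x_T))` of a cochain. -/
noncomputable def cochainCoord [Inhabited ι] (x : Module.Basis ι k g) (m : Module.Basis κ k M)
    {n : ℕ} (φ : g [⋀^Fin n]→ₗ[k] M) (c : Cell ι κ) : k :=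
  m.coord c.2 (φ (basisTuple x n c.1))

variable [LinearOrder ι] [Inhabited ι]

variable {C : StructureConstants ι κ} {x : Module.Basis ι k g} {m : Module.Basis κ k M}

lemma eval_bracket_term (hC : C.Represents x m) {n : ℕ} (φ : g [⋀^Fin (n + 1)]→ₗ[k] M) {T : List ι}
    (hn : T.length = n + 2) (l : κ) {i j : Fin (n + 2)} (hij : i < j) :
    FormalSum.eval (cochainCoord x m φ) (FormalSum.relabel (·, l) (FormalSum.bind
      (fun p => wedgeCons p ((T.eraseIdx i).eraseIdx (j - 1)))
      (C.bracket (T.getD i default) (T.getD j default)))) =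
    m.coord l (φ (Fin.cons ⁅basisTuple x (n + 2) T i, basisTuple x (n + 2) T j⁆ fun r =>
      basisTuple x (n + 2) T (i.succAbove ((j.pred (Fin.ne_zero_of_lt hij)).succAbove r)))) := by
  have hrest : (fun r => basisTuple x (n + 2) T
      (i.succAbove ((j.pred (Fin.ne_zero_of_lt hij)).succAbove r))) =
      basisTuple x n ((T.eraseIdx i).eraseIdx (j - 1)) :=
    ((basisTuple_eraseIdx x (T.eraseIdx i) (j.pred (Fin.ne_zero_of_lt hij))).trans
      (by rw [basisTuple_eraseIdx])).symm
  rw [hrest, basisTuple, basisTuple, hC.lie_eq, map_cons_eval, FormalSum.map_eval,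
    FormalSum.eval_relabel, FormalSum.eval_bind]
  refine FormalSum.eval_congr fun t _ => ?_
  rw [map_cons_basisTuple x φ t.1 (length_eraseIdx_eraseIdx hn hij j.2), FormalSum.map_eval]
  rfl

lemma eval_boundary (hC : C.Represents x m) {n : ℕ} (φ : g [⋀^Fin (n + 1)]→ₗ[k] M) {c : Cell ι κ}
    (hn : c.1.length = n + 2) :
    FormalSum.eval (cochainCoord x m φ) (C.boundary c) =
      m.coord c.2 (ceD k g M φ (basisTuple x (n + 2) c.1)) := by
  rw [boundary, FormalSum.eval_append, hn, FormalSum.eval_range_flatMap,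
    FormalSum.eval_range_flatMap, ceD, map_add, map_sum, map_sum]
  congr 1
  · refine Finset.sum_congr rfl fun i _ => ?_
    rw [FormalSum.eval_range_flatMap, map_sum]
    refine Finset.sum_congr rfl fun j _ => ?_
    by_cases hij : i < j
    · rw [dif_pos hij, if_pos (Fin.lt_def.mp hij), FormalSum.eval_scale, map_zsmul,
        eval_bracket_term hC φ hn c.2 hij]
    · rw [dif_neg hij, if_neg (Fin.lt_def.not.mp hij), map_zero]
      rfl
  · refine Finset.sum_congr rfl fun i _ => ?_
    rw [FormalSum.eval_scale, FormalSum.eval_relabel, map_zsmul, basisTuple, hC.coord_lie,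
      ← basisTuple_eraseIdx]
    rfl

end Represents

section Exactness

variable {ι κ : Type*} [LinearOrder ι] [Inhabited ι]

/-- Exactness of the complex of cochain coordinates in degree `n`, where `f ↦ (c ↦ f(∂c))` is the
differential. -/
def IsExactAt (R : Type*) [AddCommGroup R] (C : StructureConstants ι κ) (n : ℕ) : Prop :=
  ∀ f : Cell ι κ → R,
    (∀ c : Cell ι κ, c.1.Pairwise (· < ·) → c.1.length = n + 1 →
      FormalSum.eval f (C.boundary c) = 0) →
    ∃ h : Cell ι κ → R, ∀ c : Cell ι κ, c.1.Pairwise (· < ·) → c.1.length = n →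
      FormalSum.eval h (C.boundary c) = f c

variable {k g M : Type*} [Field k] [LieRing g] [LieAlgebra k g]
variable [AddCommGroup M] [Module k M] [LieRingModule g M] [LieModule k g M] [Finite κ]
variable {C : StructureConstants ι κ} {x : Module.Basis ι k g} {m : Module.Basis κ k M}

lemma exists_eq_ceD (h2 : (2 : k) ≠ 0) (hC : C.Represents x m) {n : ℕ}
    (hex : C.IsExactAt k (n + 2)) {ψ : g [⋀^Fin (n + 2)]→ₗ[k] M} (hψ : ∀ v, ceD k g M ψ v = 0) :
    ∃ φ : g [⋀^Fin (n + 1)]→ₗ[k] M, ∀ v, ψ v = ceD k g M φ v := by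
  obtain ⟨h, hh⟩ := hex (cochainCoord x m ψ) fun c _ hn => by
    rw [eval_boundary hC ψ hn, hψ, map_zero]
  obtain ⟨φ, hφ⟩ := exists_alternatingMap_basisTuple x (n + 1) fun T =>
    m.equivFun.symm fun l => h (T, l)
  obtain ⟨ω, hω⟩ := exists_alternatingMap_eq_ceD h2 φ
  have hcoord (S : List ι) (l : κ) (hS : S.Pairwise (· < ·)) (hn : S.length = n + 1) :
      cochainCoord x m φ (S, l) = h (S, l) := by
    rw [cochainCoord, hφ S hS hn, Module.Basis.coord_equivFun_symm]
  suffices ψ = ω from ⟨φ, fun v => by rw [this, hω]⟩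
  refine alternatingMap_ext_basisTuple x fun T hT hn => m.ext_elem fun l => ?_
  calc m.coord l (ψ (basisTuple x (n + 2) T))
    _ = FormalSum.eval h (C.boundary (T, l)) := (hh (T, l) hT hn).symm
    _ = FormalSum.eval (cochainCoord x m φ) (C.boundary (T, l)) :=
      FormalSum.eval_congr fun t ht => by
        obtain ⟨hS, hlen⟩ := C.boundary_keys hT hn ht
        rw [hcoord t.1.1 t.1.2 hS hlen]
    _ = m.coord l (ω (basisTuple x (n + 2) T)) := by
      rw [eval_boundary hC φ hn, hω]

lemma subsingleton_ceH (h2 : (2 : k) ≠ 0) (hC : C.Represents x m) {n : ℕ}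
    (hex : C.IsExactAt k (n + 2)) : Subsingleton (ceH k g M (n + 2)) :=
  Submodule.Quotient.subsingleton_iff.mpr
    (eq_top_iff.mpr fun ψ _ => exists_eq_ceD h2 hC hex ψ.2)

end Exactness

section Certificate

variable {a b : ℕ}

/-- The increasing cells in degree `n`. -/
def cells (a b n : ℕ) : List (Cell (Fin a) (Fin b)) :=
  (List.finRange a).sublistsLen n ×ˢ List.finRange b

lemma mem_cells {n : ℕ} {c : Cell (Fin a) (Fin b)} :
    c ∈ cells a b n ↔ c.1.Pairwise (· < ·) ∧ c.1.length = n := by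
  have hrange : (List.finRange a).Pairwise (· < ·) := (List.sortedLT_finRange a).pairwise
  rw [cells, List.mem_product, List.mem_sublistsLen, and_iff_left (List.mem_finRange c.2)]
  refine and_congr_left fun _ => ⟨fun hc => hrange.sublist hc, fun hc => ?_⟩
  exact List.sublist_of_subperm_of_pairwise
    (List.subperm_of_subset hc.nodup fun i _ => List.mem_finRange i) hc hrange

variable [Inhabited (Fin a)] (C : StructureConstants (Fin a) (Fin b)) (p : ℕ)
variable (weight : Cell (Fin a) (Fin b) → ℤ)

/-- The increasing cells of weight `w` in degree `n`. -/
def block (n : ℕ) (w : ℤ) : List (Cell (Fin a) (Fin b)) :=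
  (cells a b n).filter fun c => weight c = w

/-- The rules obtained by solving the equations `h(∂c) = f(c)`, for `c` of weight `w` in degree
`n + 1`, for the values of `h` in degree `n`. Both `h` and `f` are encoded in a single function on
cells, so that the equations become `∂c - c = 0`. -/
def primitiveRules (n : ℕ) (w : ℤ) : List (FormalSum.Rule (Cell (Fin a) (Fin b))) :=
  FormalSum.echelon p (fun c => c.1.length = n)
    ((block weight (n + 1) w).map fun c => FormalSum.collect p ((c, -1) :: C.boundary c))

/-- The rules obtained by solving the cocycle equations `f(∂c) = 0`, for `c` of weight `w` in
degree `n + 1`. -/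
def cocycleRules (n : ℕ) (w : ℤ) : List (FormalSum.Rule (Cell (Fin a) (Fin b))) :=
  FormalSum.echelon p (fun _ => true)
    ((block weight (n + 1) w).map fun c => FormalSum.collect p (C.boundary c))

/-- Decides whether the equations `h(∂c) = f(c)` in weight `w` and degree `n + 1` are solvable for
all cocycles `f`. -/
def isExactBlock (n : ℕ) (w : ℤ) : Bool :=
  (block weight (n + 1) w).all fun c =>
    (C.boundary c).all (fun t => weight t.1 = w) &&
    (FormalSum.reduce p (C.cocycleRules p weight (n + 1) w)
      (FormalSum.reduce p (C.primitiveRules p weight n w)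
        (FormalSum.collect p ((c, -1) :: C.boundary c)))).isEmpty

/-- Decides exactness in degree `n + 1` with coefficients of characteristic `p`, one weight at a
time. -/
def isExact (n : ℕ) : Bool :=
  ((cells a b (n + 1)).map weight).dedup.all (C.isExactBlock p weight n)

variable {C p weight} {R : Type*} [Ring R] [CharP R p]

lemma eval_of_mem_cocycleRules {n : ℕ} {w : ℤ} {f : Cell (Fin a) (Fin b) → R}
    (hf : ∀ c : Cell (Fin a) (Fin b), c.1.Pairwise (· < ·) → c.1.length = n + 1 →
      FormalSum.eval f (C.boundary c) = 0) {r : FormalSum.Rule (Cell (Fin a) (Fin b))}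
    (hr : r ∈ C.cocycleRules p weight n w) : FormalSum.eval f r.2 = f r.1 := by
  refine FormalSum.eval_of_mem_echelon (List.forall_mem_map.mpr fun c hc => ?_) hr
  obtain ⟨hsorted, hlen⟩ := mem_cells.mp (List.mem_of_mem_filter hc)
  rw [FormalSum.eval_collect, hf c hsorted hlen]

lemma eval_solve_boundary {n : ℕ} {w : ℤ} (hblock : C.isExactBlock p weight n w)
    {f : Cell (Fin a) (Fin b) → R}
    (hf : ∀ c : Cell (Fin a) (Fin b), c.1.Pairwise (· < ·) → c.1.length = n + 2 →
      FormalSum.eval f (C.boundary c) = 0) {c : Cell (Fin a) (Fin b)}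
    (hc : c ∈ block weight (n + 1) w) :
    (∀ t ∈ C.boundary c, weight t.1 = w) ∧
      FormalSum.eval (FormalSum.solve f (C.primitiveRules p weight n w)) (C.boundary c) = f c := by
  simp only [isExactBlock, List.all_eq_true, Bool.and_eq_true, decide_eq_true_eq,
    List.isEmpty_iff] at hblock
  obtain ⟨hweight, hreduce⟩ := hblock c hc
  refine ⟨hweight, ?_⟩
  have hlen := (mem_cells.mp (List.mem_of_mem_filter hc)).2
  have hself : FormalSum.solve f (C.primitiveRules p weight n w) c = f c :=
    FormalSum.solve_apply_of_forall_ne f fun r hr hrc => by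
      have := FormalSum.isPivot_of_mem_echelon hr
      rw [hrc, decide_eq_true_eq] at this
      omega
  have heval := congrArg (FormalSum.eval f) hreduce
  rw [FormalSum.eval_reduce, FormalSum.solve_eq_self fun r => eval_of_mem_cocycleRules hf,
    FormalSum.eval_reduce, FormalSum.eval_collect, FormalSum.eval_cons, hself,
    FormalSum.eval_nil, neg_one_smul, neg_add_eq_zero] at heval
  exact heval.symm

lemma isExactAt_of_isExact {n : ℕ} (h : C.isExact p weight n) : C.IsExactAt R (n + 1) := by
  intro f hf
  refine ⟨fun s => FormalSum.solve f (C.primitiveRules p weight n (weight s)) s,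
    fun c hsorted hlen => ?_⟩
  have hc : c ∈ cells a b (n + 1) := mem_cells.mpr ⟨hsorted, hlen⟩
  obtain ⟨hweight, heval⟩ := eval_solve_boundary
    (List.all_eq_true.mp h (weight c) (List.mem_dedup.mpr (List.mem_map_of_mem hc))) hf
    (List.mem_filter.mpr ⟨hc, decide_eq_true rfl⟩)
  rw [← heval]
  exact FormalSum.eval_congr fun t ht => by rw [hweight t ht]

end Certificate

end StructureConstants

lemma mem_center_sl_iff {n R : Type*} [Fintype n] [DecidableEq n] [CommRing R]
    (x : LieAlgebra.SpecialLinear.sl n R) :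
    x ∈ LieAlgebra.center R (LieAlgebra.SpecialLinear.sl n R) ↔
      x.1 ∈ Set.range (Matrix.scalar n) := by
  rw [LieAlgebra.center, LieModule.mem_maxTrivSubmodule, Matrix.mem_range_scalar_iff_commute_single]
  have hlie (y : LieAlgebra.SpecialLinear.sl n R) : ⁅y, x⁆ = 0 ↔ Commute y.1 x.1 := by
    rw [Subtype.ext_iff, LieAlgebra.SpecialLinear.sl_bracket]
    exact sub_eq_zero
  simp only [hlie]
  refine ⟨fun h i j hij => ?_, fun h y => ?_⟩
  · simpa using h (LieAlgebra.SpecialLinear.single i j hij 1)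
  · obtain ⟨r, hr⟩ := Matrix.mem_range_scalar_of_commute_single h
    exact hr ▸ (Matrix.scalar_commute r (Commute.all r) y.1).symm

namespace SL3

section Coordinates

variable {R S : Type*} [CommRing R] [CommRing S]

/-- Coordinates on traceless `3 × 3` matrices in characteristic `3`. The first seven vanish on
scalar matrices, which are traceless. -/
def entries (X : Matrix (Fin 3) (Fin 3) R) : Fin 8 → R :=
  ![X 0 1, X 1 2, X 0 2, X 1 0, X 2 1, X 2 0, X 0 0 - X 2 2, X 2 2]

/-- The matrix with given coordinates, inverse to `entries` in characteristic `3`. -/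
def ofEntries (c : Fin 8 → R) : Matrix (Fin 3) (Fin 3) R :=
  !![c 6 + c 7, c 0, c 2; c 3, c 7 - c 6, c 1; c 5, c 4, c 7]

lemma entries_ofEntries (c : Fin 8 → R) : entries (ofEntries c) = c := by
  ext i
  fin_cases i <;> simp [entries, ofEntries]

lemma trace_ofEntries [CharP R 3] (c : Fin 8 → R) : (ofEntries c).trace = 0 := by
  have h3 : (3 : R) = 0 := by exact_mod_cast CharP.cast_eq_zero R 3
  simp only [Matrix.trace_fin_three, ofEntries, Matrix.of_apply, Matrix.cons_val]
  linear_combination c 7 * h3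

lemma ofEntries_entries [CharP R 3] {X : Matrix (Fin 3) (Fin 3) R} (hX : X.trace = 0) :
    ofEntries (entries X) = X := by
  have h3 : (3 : R) = 0 := by exact_mod_cast CharP.cast_eq_zero R 3
  rw [Matrix.trace_fin_three] at hX
  ext i j
  fin_cases i <;> fin_cases j <;> simp [entries, ofEntries]
  linear_combination X 2 2 * h3 - hX

lemma entries_mapMatrix (f : R →+* S) (X : Matrix (Fin 3) (Fin 3) R) (l : Fin 8) :
    entries (f.mapMatrix X) l = f (entries X l) := by
  fin_cases l <;> simp [entries]

lemma ofEntries_map (f : R →+* S) (c : Fin 8 → R) :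
    ofEntries (fun l => f (c l)) = f.mapMatrix (ofEntries c) := by
  ext i j
  fin_cases i <;> fin_cases j <;> simp [ofEntries]

lemma mem_range_scalar_iff_entries [CharP R 3] {X : Matrix (Fin 3) (Fin 3) R} (hX : X.trace = 0) :
    X ∈ Set.range (Matrix.scalar (Fin 3)) ↔ ∀ l : Fin 7, entries X l.castSucc = 0 := by
  refine ⟨?_, fun h => ⟨entries X 7, ?_⟩⟩
  · rintro ⟨r, rfl⟩ l
    fin_cases l <;> simp [entries]
  · have hlast : entries X = Fin.snoc (α := fun _ => R) (fun _ : Fin 7 => 0) (entries X 7) := by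
      ext l
      refine Fin.lastCases ?_ (fun l => ?_) l
      · rw [Fin.snoc_last]
        rfl
      · rw [h, Fin.snoc_castSucc]
    rw [← ofEntries_entries hX, hlast]
    ext i j
    fin_cases i <;> fin_cases j <;> simp [ofEntries, entries, Fin.snoc]

variable (R) in
/-- The matrices with coordinates the standard unit vectors. -/
def basisMatrix (i : Fin 8) : Matrix (Fin 3) (Fin 3) R := ofEntries (Pi.single i 1)

lemma basisMatrix_eq_map_int (i : Fin 8) :
    basisMatrix R i = (Int.castRingHom R).mapMatrix (basisMatrix ℤ i) := by
  rw [basisMatrix, basisMatrix, ← ofEntries_map]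
  congr 1
  ext l
  simp [Pi.single_apply]

/-- The coordinates of the brackets of the basis matrices, computed over the integers. -/
def bracketCoeff (i j l : Fin 8) : ℤ := entries ⁅basisMatrix ℤ i, basisMatrix ℤ j⁆ l

lemma entries_lie_basisMatrix (i j l : Fin 8) :
    entries ⁅basisMatrix R i, basisMatrix R j⁆ l = bracketCoeff i j l := by
  simp only [basisMatrix_eq_map_int (R := R), Ring.lie_def, ← map_mul, ← map_sub,
    entries_mapMatrix, bracketCoeff, eq_intCast]

end Coordinates

section Bases

variable (k : Type*) [Field k] [CharP k 3]

/-- The linear coordinates `entries` on `sl₃`. -/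
noncomputable def coordEquiv : sl3 k ≃ₗ[k] (Fin 8 → k) where
  toFun x := entries x.1
  invFun c := ⟨ofEntries c, trace_ofEntries c⟩
  map_add' x y := by
    ext i
    fin_cases i <;> simp [entries]
    ring
  map_smul' a x := by
    ext i
    fin_cases i <;> simp [entries]
    ring
  left_inv x := Subtype.ext (ofEntries_entries x.2)
  right_inv c := entries_ofEntries c

/-- The basis `e₁₂, e₂₃, e₁₃, e₂₁, e₃₂, e₃₁, e₁₁ - e₂₂, 1` of `sl₃`. -/
noncomputable def basis : Module.Basis (Fin 8) k (sl3 k) := .ofEquivFun (coordEquiv k)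

/-- The coordinates which vanish on the center. -/
noncomputable def quotCoord : sl3 k →ₗ[k] (Fin 7 → k) :=
  LinearMap.funLeft k k Fin.castSucc ∘ₗ (coordEquiv k).toLinearMap

lemma surjective_quotCoord : Function.Surjective (quotCoord k) :=
  (LinearMap.funLeft_surjective_of_injective k k _ (Fin.castSucc_injective 7)).comp
    (coordEquiv k).surjective

lemma center_eq_ker_quotCoord :
    (LieAlgebra.center k (sl3 k)).toSubmodule = LinearMap.ker (quotCoord k) := by
  ext x
  rw [LieSubmodule.mem_toSubmodule, mem_center_sl_iff, mem_range_scalar_iff_entries x.2,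
    LinearMap.mem_ker, funext_iff]
  rfl

/-- The basis of `sl₃/Z(sl₃)` consisting of the classes of the first seven basis elements. -/
noncomputable def quotBasis : Module.Basis (Fin 7) k (sl3ModCenter k) :=
  .ofEquivFun (Submodule.quotEquivOfEq _ _ (center_eq_ker_quotCoord k) ≪≫ₗ
    (quotCoord k).quotKerEquivOfSurjective (surjective_quotCoord k))

lemma coord_quotBasis_mk (x : sl3 k) (l : Fin 7) :
    (quotBasis k).coord l (LieSubmodule.Quotient.mk x) = entries x.1 l.castSucc := by
  rw [Module.Basis.coord_apply, quotBasis, Module.Basis.ofEquivFun_repr_apply]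
  rfl

lemma coe_basis (i : Fin 8) : (basis k i).1 = basisMatrix k i := by
  rw [basis, Module.Basis.coe_ofEquivFun]
  rfl

lemma quotBasis_eq_mk (q : Fin 7) :
    quotBasis k q = LieSubmodule.Quotient.mk (basis k q.castSucc) := by
  refine (quotBasis k).ext_elem fun l => ?_
  rw [← Module.Basis.coord_apply _ l (LieSubmodule.Quotient.mk _), coord_quotBasis_mk, coe_basis,
    basisMatrix, entries_ofEntries, Module.Basis.repr_self, Finsupp.single_eq_pi_single]
  simp only [Pi.single_apply, Fin.castSucc_inj]

lemma entries_lie_basis (i j l : Fin 8) :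
    entries ⁅basis k i, basis k j⁆.1 l = bracketCoeff i j l := by
  rw [← entries_lie_basisMatrix, ← coe_basis, ← coe_basis]
  rfl

end Bases

section Certificate

/-- The function `f`, tabulated for evaluation by the kernel, which caches the table entries. -/
def tabulate {α : Type*} [Inhabited α] {n : ℕ} (f : Fin n → α) (i : Fin n) : α :=
  ((List.finRange n).map f).getD i default

lemma tabulate_apply {α : Type*} [Inhabited α] {n : ℕ} (f : Fin n → α) (i : Fin n) :
    tabulate f i = f i := by
  simp [tabulate]

/-- The structure constants of `sl₃` and its quotient by the center. -/
def constants : StructureConstants (Fin 8) (Fin 7) where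
  bracket := tabulate fun i => tabulate fun j => FormalSum.ofFn (bracketCoeff i j)
  action := tabulate fun i => tabulate fun l =>
    FormalSum.ofFn fun q => bracketCoeff i q.castSucc l.castSucc

lemma represents_constants (k : Type*) [Field k] [CharP k 3] :
    constants.Represents (basis k) (quotBasis k) where
  lie_eq i j := by
    simp only [constants, tabulate_apply, FormalSum.eval_ofFn]
    rw [← (basis k).sum_repr ⁅basis k i, basis k j⁆]
    refine Finset.sum_congr rfl fun l _ => ?_
    rw [← Int.cast_smul_eq_zsmul k, ← entries_lie_basis k]
    rfl
  coord_lie i l w := by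
    simp only [constants, tabulate_apply, FormalSum.eval_ofFn]
    conv_lhs => rw [← (quotBasis k).sum_repr w, lie_sum, map_sum]
    refine Finset.sum_congr rfl fun q _ => ?_
    have hq : (quotBasis k).coord l ⁅basis k i, quotBasis k q⁆ =
        bracketCoeff i q.castSucc l.castSucc := by
      rw [quotBasis_eq_mk, ← entries_lie_basis k, ← coord_quotBasis_mk]
      rfl
    rw [lie_smul, map_smul, hq, zsmul_eq_mul, mul_comm]
    rfl

/-- The weights of the basis elements for the action of the diagonal torus, encoded as
integers. The simple roots are `1` and `10`, which keeps distinct weights of cochains distinct. -/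
def rootWeight : Fin 8 → ℤ := ![1, 10, 11, -1, -10, -11, 0, 0]

/-- The weight of a cell for the action of the diagonal torus. -/
def weight (c : Cell (Fin 8) (Fin 7)) : ℤ := (c.1.map rootWeight).sum - rootWeight c.2.castSucc

set_option maxRecDepth 100000 in
lemma isExact_two : constants.isExact 3 weight 1 := by
  decide +kernel

set_option maxRecDepth 100000 in
lemma isExact_six : constants.isExact 3 weight 5 := by
  decide +kernel

set_option maxRecDepth 100000 in
lemma isExact_eight : constants.isExact 3 weight 7 := by
  decide +kernel

end Certificate

end SL3

end ChevalleyEilenberg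

open ChevalleyEilenberg in
theorem H2_H6_H8_quotient_module_vanish_general (k : Type*) [Field k] [CharP k 3] :
    Subsingleton (ceH k (sl3 k) (sl3ModCenter k) 2) ∧
      Subsingleton (ceH k (sl3 k) (sl3ModCenter k) 6) ∧
        Subsingleton (ceH k (sl3 k) (sl3ModCenter k) 8) := by
  have h2 : (2 : k) ≠ 0 := Ring.two_ne_zero (by rw [ringChar.eq k 3]; decide)
  have hvanish {n : ℕ} (h : SL3.constants.isExact 3 SL3.weight (n + 1)) :
      Subsingleton (ceH k (sl3 k) (sl3ModCenter k) (n + 2)) :=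
    StructureConstants.subsingleton_ceH h2 (SL3.represents_constants k)
      (StructureConstants.isExactAt_of_isExact h)
  exact ⟨hvanish SL3.isExact_two, hvanish SL3.isExact_six, hvanish SL3.isExact_eight⟩

theorem H2_H6_H8_quotient_module_vanish (k : Type*) [Field k] [IsAlgClosed k] [CharP k 3] :
    Subsingleton (ceH k (sl3 k) (sl3ModCenter k) 2) ∧
      Subsingleton (ceH k (sl3 k) (sl3ModCenter k) 6) ∧
        Subsingleton (ceH k (sl3 k) (sl3ModCenter k) 8) :=
  H2_H6_H8_quotient_module_vanish_general k
end

section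
/- Let k be an algebraically closed field of characteristic 3, let g = sl_3(k) be the Lie algebra of traceless 3×3 matrices over k, let Z(g) be its center, and let L = g/Z(g) be the 7-dimensional quotient g-module with the action induced by the adjoint action. Then dim_k H^3(g, L) = 8. -/
/-!
Cartan's formula `ι_x ∘ d + d ∘ ι_x = L_x` determines the Chevalley–Eilenberg differential
recursively: it yields `d² = 0`, and it computes the matrices of `d` from the structure constants
of the Lie algebra and the module. In characteristic `3` the identity matrix is traceless and spans
the center of `sl₃`, so a basis of `sl₃` ending with the identity induces a basis of `L = sl₃ / Z`,
and all structure constants lie in `{0, 1, -1}`. The ranks of `d : C² → C³` and `d : C³ → C⁴` are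
therefore ranks of explicit matrices over `𝔽₃`, which Gaussian elimination finds to be `154` and
`230`, so that `dim H³ = 56 * 7 - 154 - 230 = 8`.
-/

open Module Function

/-! ### Cartan's formula and the differential -/

section LieDerivative

variable {R g N M : Type*} [CommRing R] [AddCommGroup N] [Module R N] [AddCommGroup M] [Module R M]
  {n : ℕ}

lemma update_id_eval (T : End R N) (j : Fin n) (v : Fin n → N) :
    (fun i => update (fun _ => LinearMap.id) j T i (v i)) = update v j (T (v j)) := by
  funext i
  rcases eq_or_ne i j with rfl | h <;> simp [*]

/-- The derivation `ψ ↦ (v ↦ ∑ j, ψ (v₀, …, T vⱼ, …, vₙ₋₁))` of alternating maps induced by an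
endomorphism `T` of their domain. -/
def altDeriv (T : End R N) : End R (N [⋀^Fin n]→ₗ[R] M) where
  toFun ψ :=
    { toMultilinearMap :=
        ∑ j, ψ.toMultilinearMap.compLinearMap (update (fun _ => LinearMap.id) j T)
      map_eq_zero_of_eq' := by
        intro v a b hv hab
        have swap : update v b (T (v b)) = update v a (T (v a)) ∘ Equiv.swap a b := by
          rw [Equiv.comp_swap_eq_update, update_of_ne hab.symm, update_self, update_comm hab.symm,
            update_idem, ← hv, update_eq_self]
        suffices ∑ j, ψ (update v j (T (v j))) = 0 by simpa [update_id_eval]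
        rw [Fintype.sum_eq_add a b hab, swap, ψ.map_swap _ hab, add_neg_cancel]
        rintro j ⟨ha, hb⟩
        exact ψ.map_eq_zero_of_eq _ (by simp [ha.symm, hb.symm, hv]) hab }
  map_add' ψ φ := by ext v; simp [Finset.sum_add_distrib]
  map_smul' c ψ := by ext v; simp [Finset.smul_sum]

lemma altDeriv_apply (T : End R N) (ψ : N [⋀^Fin n]→ₗ[R] M) (v : Fin n → N) :
    altDeriv T ψ v = ∑ j, ψ (update v j (T (v j))) := by
  simp [altDeriv, update_id_eval]

lemma altDeriv_add (S T : End R N) (ψ : N [⋀^Fin n]→ₗ[R] M) :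
    altDeriv (S + T) ψ = altDeriv S ψ + altDeriv T ψ := by
  ext v
  simp [altDeriv_apply, Finset.sum_add_distrib]

lemma altDeriv_smul (c : R) (T : End R N) (ψ : N [⋀^Fin n]→ₗ[R] M) :
    altDeriv (c • T) ψ = c • altDeriv T ψ := by
  ext v
  simp [altDeriv_apply, Finset.smul_sum]

lemma altDeriv_compAlternatingMap (T : End R N) (S : End R M) (ψ : N [⋀^Fin n]→ₗ[R] M) :
    altDeriv T (S.compAlternatingMap ψ) = S.compAlternatingMap (altDeriv T ψ) := by
  ext v
  simp [altDeriv_apply]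

lemma ext_curryLeft {ψ φ : N [⋀^Fin (n + 1)]→ₗ[R] M} (h : ∀ x, ψ.curryLeft x = φ.curryLeft x) :
    ψ = φ := by
  ext v
  rw [← Fin.cons_self_tail v]
  exact DFunLike.congr_fun (h (v 0)) (Fin.tail v)

lemma curryLeft_altDeriv (T : End R N) (ψ : N [⋀^Fin (n + 1)]→ₗ[R] M) (y : N) :
    (altDeriv T ψ).curryLeft y = ψ.curryLeft (T y) + altDeriv T (ψ.curryLeft y) := by
  ext w
  simp [altDeriv_apply, Fin.sum_univ_succ, Matrix.vecCons, Fin.cons_update]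

lemma altDeriv_commutator (S T : End R N) (ψ : N [⋀^Fin n]→ₗ[R] M) :
    altDeriv S (altDeriv T ψ) - altDeriv T (altDeriv S ψ) = altDeriv (T * S - S * T) ψ := by
  induction n with
  | zero => ext v; simp [altDeriv_apply]
  | succ n ih =>
    refine ext_curryLeft fun y => ?_
    rw [curryLeft_altDeriv, ← ih, ← AlternatingMap.curryLeftLinearMap_apply]
    simp only [map_sub, LinearMap.sub_apply, AlternatingMap.curryLeftLinearMap_apply,
      curryLeft_altDeriv, map_add, Module.End.mul_apply]
    abel

variable [LieRing g] [LieAlgebra R g] [LieRingModule g N] [LieModule R g N]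
  [LieRingModule g M] [LieModule R g M]

open LieModule (toEnd)

/-- The Lie derivative as an action of `g` on alternating maps. -/
instance altLieRingModule : LieRingModule g (N [⋀^Fin n]→ₗ[R] M) where
  bracket x ψ := (toEnd R g M x).compAlternatingMap ψ - altDeriv (toEnd R g N x) ψ
  add_lie x y ψ := by
    ext v
    simp only [map_add, altDeriv_add, AlternatingMap.sub_apply, AlternatingMap.add_apply,
      LinearMap.compAlternatingMap_apply, LinearMap.add_apply]
    abel
  lie_add x ψ φ := by
    ext v
    simp only [map_add, AlternatingMap.sub_apply, AlternatingMap.add_apply,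
      LinearMap.compAlternatingMap_apply]
    abel
  leibniz_lie x y ψ := by
    have h := altDeriv_commutator (toEnd R g N y) (toEnd R g N x) ψ
    have toEnd_lie : toEnd R g N x * toEnd R g N y - toEnd R g N y * toEnd R g N x =
        toEnd R g N ⁅x, y⁆ := by ext; simp
    rw [toEnd_lie] at h
    ext v
    simp only [AlternatingMap.sub_apply, AlternatingMap.add_apply,
      LinearMap.compAlternatingMap_apply, LieModule.toEnd_apply_apply, map_sub, ← h,
      altDeriv_compAlternatingMap, lie_lie]
    abel

lemma altLie_def (x : g) (ψ : N [⋀^Fin n]→ₗ[R] M) :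
    ⁅x, ψ⁆ = (toEnd R g M x).compAlternatingMap ψ - altDeriv (toEnd R g N x) ψ :=
  rfl

lemma altLie_apply (x : g) (ψ : N [⋀^Fin n]→ₗ[R] M) (v : Fin n → N) :
    ⁅x, ψ⁆ v = ⁅x, ψ v⁆ - ∑ j, ψ (update v j ⁅x, v j⁆) := by
  simp [altLie_def, altDeriv_apply]

instance altLieModule : LieModule R g (N [⋀^Fin n]→ₗ[R] M) where
  smul_lie c x ψ := by
    ext v
    simp [altLie_def, altDeriv_smul, smul_sub]
  lie_smul c x ψ := by
    ext v
    simp [altLie_def, smul_sub]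

lemma curryLeft_lie (x : g) (y : N) (ψ : N [⋀^Fin (n + 1)]→ₗ[R] M) :
    ⁅x, ψ⁆.curryLeft y = ⁅x, ψ.curryLeft y⁆ - ψ.curryLeft ⁅x, y⁆ := by
  rw [altLie_def, altLie_def, ← AlternatingMap.curryLeftLinearMap_apply, map_sub,
    LinearMap.sub_apply]
  simp only [AlternatingMap.curryLeftLinearMap_apply, curryLeft_altDeriv,
    AlternatingMap.curryLeft_compAlternatingMap, LieModule.toEnd_apply_apply]
  abel

end LieDerivative

lemma cons_succ_succAbove {α : Type*} {n : ℕ} (x : α) (v : Fin (n + 1) → α) (i : Fin (n + 1)) :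
    (fun l => (Fin.cons x v : Fin (n + 2) → α) (i.succ.succAbove l)) =
      Fin.cons x fun l => v (i.succAbove l) := by
  funext l
  cases l using Fin.cases <;> simp

lemma cons_succAbove_succAbove {α : Type*} {n : ℕ} (x : α) (v : Fin (n + 2) → α)
    {i j : Fin (n + 2)} (h : i < j) :
    (fun l => (Fin.cons x v : Fin (n + 3) → α) (i.succ.succAbove (j.succAbove l))) =
      Fin.cons x fun l => v (i.succAbove ((j.pred h.ne_bot).succAbove l)) := by
  obtain ⟨j, rfl⟩ := Fin.exists_succ_eq_of_ne_zero h.ne_bot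
  funext l
  cases l using Fin.cases <;> simp

section Uncurry

variable {R N M : Type*} [CommRing R] [AddCommGroup N] [Module R N] [AddCommGroup M] [Module R M]
  {n : ℕ}

lemma map_eq_zero_of_curryLeft_eq_zero (φ : N [⋀^Fin (n + 1)]→ₗ[R] M) {w : Fin (n + 1) → N}
    {i : Fin (n + 1)} (h : φ.curryLeft (w i) = 0) : φ w = 0 := by
  rw [← i.insertNth_self_removeNth w, AlternatingMap.map_insertNth,
    ← AlternatingMap.curryLeft_apply_apply, h, AlternatingMap.zero_apply, smul_zero]

lemma exists_curryLeft_eq (f : N →ₗ[R] N [⋀^Fin n]→ₗ[R] M)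
    (h : ∀ (w : Fin n → N) (i : Fin n), f (w i) w = 0) :
    ∃ F : N [⋀^Fin (n + 1)]→ₗ[R] M, F.curryLeft = f := by
  refine ⟨⟨(AlternatingMap.toMultilinearMapLM ∘ₗ f).uncurryLeft, fun v i j hv hij => ?_⟩, rfl⟩
  change f (v 0) (Fin.tail v) = 0
  wlog hlt : i < j generalizing i j
  · exact this j i hv.symm hij.symm (lt_of_le_of_ne (not_lt.mp hlt) hij.symm)
  obtain ⟨j, rfl⟩ := Fin.exists_succ_eq_of_ne_zero hlt.ne_bot
  cases i using Fin.cases with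
  | zero => rw [hv]; exact h (Fin.tail v) j
  | succ i => exact (f (v 0)).map_eq_zero_of_eq _ hv (ne_of_apply_ne Fin.succ hij)

lemma map_cons_removeNth (ψ : N [⋀^Fin (n + 1)]→ₗ[R] M) (v : Fin (n + 1) → N) (j : Fin (n + 1))
    (y : N) :
    ψ (Fin.cons y fun l => v (j.succAbove l)) = (-1 : ℤ) ^ j.val • ψ (update v j y) := by
  rw [← Fin.insertNth_removeNth, AlternatingMap.map_insertNth, smul_smul, ← mul_pow, neg_one_mul,
    neg_neg, one_pow, one_smul]
  rfl

lemma map_cons_cons_swap (ψ : N [⋀^Fin (n + 2)]→ₗ[R] M) (x y : N) (w : Fin n → N) :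
    ψ (Fin.cons y (Fin.cons x w)) = -ψ (Fin.cons x (Fin.cons y w)) := by
  rw [← ψ.map_swap _ (Fin.zero_ne_one (n := n))]
  congr 1
  funext l
  refine Fin.cases ?_ (fun l => Fin.cases ?_ (fun l => ?_) l) l
  · simp
  · simp
  · rw [comp_apply, Equiv.swap_apply_of_ne_of_ne] <;> simp [Fin.ext_iff]

end Uncurry

section Differential

variable {k g M : Type*} [Field k] [LieRing g] [LieAlgebra k g]
  [AddCommGroup M] [Module k M] {n : ℕ}

lemma bracket_summand_zero (ψ : g [⋀^Fin (n + 1)]→ₗ[k] M) (x : g) (v : Fin (n + 1) → g)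
    (j : Fin (n + 1)) :
    (-1 : ℤ) ^ (j.val + 1) • ψ (Fin.cons ⁅x, v j⁆ fun l => v (j.succAbove l)) =
      -ψ (update v j ⁅x, v j⁆) := by
  rw [map_cons_removeNth, smul_smul, ← pow_add, Odd.neg_one_pow ⟨j, by ring⟩, neg_one_smul]

lemma bracket_summand_succ (ψ : g [⋀^Fin (n + 2)]→ₗ[k] M) (x : g) (v : Fin (n + 2) → g)
    {i j : Fin (n + 2)} (h : i < j) :
    (-1 : ℤ) ^ (i.val + 1 + (j.val + 1)) • ψ (Fin.cons ⁅v i, v j⁆ fun l =>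
        (Fin.cons x v : Fin (n + 3) → g) (i.succ.succAbove (j.succAbove l))) =
      -((-1 : ℤ) ^ (i.val + j.val) • ψ.curryLeft x (Fin.cons ⁅v i, v j⁆ fun l =>
        v (i.succAbove ((j.pred h.ne_bot).succAbove l)))) := by
  rw [cons_succAbove_succAbove x v h, map_cons_cons_swap, smul_neg,
    AlternatingMap.curryLeft_apply_apply, show i.val + 1 + (j.val + 1) = i.val + j.val + 2 by ring,
    pow_add, neg_one_sq, mul_one]
  rfl

variable [LieRingModule g M] [LieModule k g M]

lemma ceD_cons_zero (ψ : g [⋀^Fin 0]→ₗ[k] M) (x : g) (v : Fin 0 → g) :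
    ceD k g M ψ (Fin.cons x v) = ⁅x, ψ⁆ v := by
  simp [ceD, altLie_apply, Subsingleton.elim v ![]]

/-- Cartan's formula `ι_x ∘ d + d ∘ ι_x = L_x`. -/
lemma ceD_cons (ψ : g [⋀^Fin (n + 1)]→ₗ[k] M) (x : g) (v : Fin (n + 1) → g) :
    ceD k g M ψ (Fin.cons x v) = ⁅x, ψ⁆ v - ceD k g M (ψ.curryLeft x) v := by
  have bracket_zero := bracket_summand_zero ψ x v
  have action_succ := cons_succ_succAbove x v
  cases n with
  | zero =>
    have bracket_eq : (-1 : ℤ) ^ 1 • ψ (Fin.cons ⁅x, v 0⁆ fun l => v l.succ) =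
        -∑ j, ψ (update v j ⁅x, v j⁆) := by
      rw [Fin.sum_univ_one]
      exact bracket_zero 0
    have action_eq : ψ (Fin.cons x fun l => v l.succ) = ψ.curryLeft x ![] :=
      congrArg (ψ.curryLeft x) (Subsingleton.elim _ _)
    simp only [ceD, Fin.sum_univ_succ (n := 1), Finset.univ_unique, Finset.sum_singleton,
      Fin.default_eq_zero, altLie_apply, Fin.cons_zero, Fin.cons_succ, Fin.succAbove_zero,
      Fin.pred_succ, action_succ, Fin.val_zero, Fin.val_succ, zero_add, pow_zero, one_smul,
      Fin.succ_pos, Fin.not_lt_zero, dite_true, dite_false, Fin.succ_lt_succ_iff]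
    rw [bracket_eq, action_eq, pow_one, neg_one_smul]
    abel
  | succ n =>
    have bracket_succ (i j : Fin (n + 2)) :
        (if _h : i < j then (-1 : ℤ) ^ (i.val + 1 + (j.val + 1)) • ψ (Fin.cons ⁅v i, v j⁆ fun l =>
            (Fin.cons x v : Fin (n + 3) → g) (i.succ.succAbove (j.succAbove l))) else 0) =
          -(if h : i < j then (-1 : ℤ) ^ (i.val + j.val) • ψ.curryLeft x (Fin.cons ⁅v i, v j⁆
            fun l => v (i.succAbove ((j.pred h.ne_bot).succAbove l))) else 0) := by
      split_ifs with h
      · exact bracket_summand_succ ψ x v h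
      · exact neg_zero.symm
    have action_sum_succ (i : Fin (n + 2)) :
        (-1 : ℤ) ^ (i.val + 1) • ⁅v i, ψ (Fin.cons x fun l => v (i.succAbove l))⁆ =
          -((-1 : ℤ) ^ i.val • ⁅v i, ψ.curryLeft x fun l => v (i.succAbove l)⁆) := by
      rw [pow_succ, mul_neg_one, neg_smul]
      rfl
    simp only [ceD, Fin.sum_univ_succ (n := n + 2), altLie_apply, Fin.cons_zero, Fin.cons_succ,
      Fin.succAbove_zero, Fin.pred_succ, action_succ, Fin.val_zero, Fin.val_succ, zero_add,
      pow_zero, one_smul, Fin.succ_pos, Fin.not_lt_zero, dite_true, dite_false,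
      Fin.succ_lt_succ_iff, bracket_zero, bracket_succ, action_sum_succ, Finset.sum_neg_distrib]
    abel

lemma ceD_curryLeft_cons_self (ψ : g [⋀^Fin (n + 1)]→ₗ[k] M) (x : g) (v : Fin n → g) :
    ceD k g M (ψ.curryLeft x) (Fin.cons x v) = ⁅x, ψ.curryLeft x⁆ v := by
  cases n with
  | zero => exact ceD_cons_zero _ x v
  | succ n => rw [ceD_cons, AlternatingMap.curryLeft_same, ceD_zero, sub_zero]

lemma exists_linearMap_eq_ceD
    (h : ∀ ψ : g [⋀^Fin n]→ₗ[k] M, ∃ φ : g [⋀^Fin (n + 1)]→ₗ[k] M, ∀ v, φ v = ceD k g M ψ v) :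
    ∃ d : (g [⋀^Fin n]→ₗ[k] M) →ₗ[k] g [⋀^Fin (n + 1)]→ₗ[k] M, ∀ ψ v, d ψ v = ceD k g M ψ v := by
  choose d hd using h
  refine ⟨⟨⟨d, fun ψ φ => ?_⟩, fun c ψ => ?_⟩, hd⟩
  · ext v
    simp only [AlternatingMap.add_apply, hd, ceD_add]
  · ext v
    simp only [AlternatingMap.smul_apply, hd, ceD_smul, RingHom.id_apply]

variable (k g M) in
lemma exists_differential (n : ℕ) :
    ∃ d : (g [⋀^Fin n]→ₗ[k] M) →ₗ[k] g [⋀^Fin (n + 1)]→ₗ[k] M, ∀ ψ v, d ψ v = ceD k g M ψ v := by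
  let lieLeft {m : ℕ} (ψ : g [⋀^Fin m]→ₗ[k] M) : g →ₗ[k] g [⋀^Fin m]→ₗ[k] M :=
    { toFun := fun x => ⁅x, ψ⁆
      map_add' := fun x y => add_lie x y ψ
      map_smul' := fun c x => smul_lie c x ψ }
  induction n with
  | zero =>
    refine exists_linearMap_eq_ceD fun ψ => ?_
    obtain ⟨φ, hφ⟩ := exists_curryLeft_eq (lieLeft ψ) fun _ i => i.elim0
    refine ⟨φ, fun v => ?_⟩
    rw [← Fin.cons_self_tail v, ceD_cons_zero]
    exact congr($hφ (v 0) (Fin.tail v))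
  | succ n ih =>
    obtain ⟨d, hd⟩ := ih
    refine exists_linearMap_eq_ceD fun ψ => ?_
    obtain ⟨φ, hφ⟩ := exists_curryLeft_eq (lieLeft ψ - d ∘ₗ ψ.curryLeft) fun w i => by
      refine map_eq_zero_of_curryLeft_eq_zero (i := i) _ ?_
      ext v
      change ⁅w i, ψ⁆.curryLeft (w i) v - d (ψ.curryLeft (w i)) (Fin.cons (w i) v) = 0
      rw [hd, ceD_curryLeft_cons_self, curryLeft_lie, lie_self, map_zero, sub_zero, sub_self]
    refine ⟨φ, fun v => ?_⟩
    rw [← Fin.cons_self_tail v, ceD_cons, ← hd]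
    exact congr($hφ (v 0) (Fin.tail v))

variable (k g M) in
/-- The Chevalley–Eilenberg differential `ceD` as a linear map between cochain spaces. -/
noncomputable def ceDiff (n : ℕ) : (g [⋀^Fin n]→ₗ[k] M) →ₗ[k] g [⋀^Fin (n + 1)]→ₗ[k] M :=
  (exists_differential k g M n).choose

lemma ceDiff_apply (ψ : g [⋀^Fin n]→ₗ[k] M) (v : Fin (n + 1) → g) :
    ceDiff k g M n ψ v = ceD k g M ψ v :=
  (exists_differential k g M n).choose_spec ψ v

lemma curryLeft_ceDiff_zero (ψ : g [⋀^Fin 0]→ₗ[k] M) (x : g) :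
    (ceDiff k g M 0 ψ).curryLeft x = ⁅x, ψ⁆ := by
  ext v
  exact (ceDiff_apply _ _).trans (ceD_cons_zero ψ x v)

lemma curryLeft_ceDiff (ψ : g [⋀^Fin (n + 1)]→ₗ[k] M) (x : g) :
    (ceDiff k g M (n + 1) ψ).curryLeft x = ⁅x, ψ⁆ - ceDiff k g M n (ψ.curryLeft x) := by
  ext v
  rw [AlternatingMap.sub_apply, ceDiff_apply]
  exact (ceDiff_apply _ _).trans (ceD_cons ψ x v)

lemma ceDiff_lie (x : g) (ψ : g [⋀^Fin n]→ₗ[k] M) :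
    ceDiff k g M n ⁅x, ψ⁆ = ⁅x, ceDiff k g M n ψ⁆ := by
  induction n with
  | zero =>
    refine ext_curryLeft fun y => ?_
    rw [curryLeft_lie, curryLeft_ceDiff_zero, curryLeft_ceDiff_zero, curryLeft_ceDiff_zero, lie_lie,
      sub_sub_cancel]
  | succ n ih =>
    refine ext_curryLeft fun y => ?_
    rw [curryLeft_lie, curryLeft_ceDiff, curryLeft_ceDiff, curryLeft_ceDiff, curryLeft_lie, map_sub,
      ih, lie_sub, lie_lie]
    abel

theorem ceDiff_ceDiff (ψ : g [⋀^Fin n]→ₗ[k] M) :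
    ceDiff k g M (n + 1) (ceDiff k g M n ψ) = 0 := by
  induction n with
  | zero =>
    refine ext_curryLeft fun x => ?_
    rw [curryLeft_ceDiff, curryLeft_ceDiff_zero, ceDiff_lie, sub_self]
    rfl
  | succ n ih =>
    refine ext_curryLeft fun x => ?_
    rw [curryLeft_ceDiff, curryLeft_ceDiff, map_sub, ih, ceDiff_lie, sub_zero, sub_self]
    rfl

variable (k g M n)

lemma ceZ_eq_ker : ceZ k g M n = LinearMap.ker (ceDiff k g M n) := by
  ext ψ
  rw [LinearMap.mem_ker, AlternatingMap.ext_iff]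
  simp only [ceDiff_apply]
  rfl

lemma ceB_succ_eq_range : ceB k g M (n + 1) = LinearMap.range (ceDiff k g M n) := by
  ext ψ
  simp only [LinearMap.mem_range, AlternatingMap.ext_iff, ceDiff_apply, eq_comm (b := ψ _)]
  rfl

end Differential

section Dimension

variable (k g M : Type*) [Field k] [LieRing g] [LieAlgebra k g] [FiniteDimensional k g]
  [AddCommGroup M] [Module k M] [FiniteDimensional k M] (n : ℕ)

lemma finiteDimensional_alternatingMap : FiniteDimensional k (g [⋀^Fin n]→ₗ[k] M) :=
  .of_injective _ exteriorPower.alternatingMapLinearEquiv.injective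

lemma finrank_alternatingMap :
    finrank k (g [⋀^Fin n]→ₗ[k] M) = (finrank k g).choose n * finrank k M := by
  rw [exteriorPower.alternatingMapLinearEquiv.finrank_eq, finrank_linearMap,
    exteriorPower.finrank_eq]

variable [LieRingModule g M] [LieModule k g M]

theorem finrank_ceH_succ_add :
    finrank k (ceH k g M (n + 1)) + finrank k (LinearMap.range (ceDiff k g M n)) +
        finrank k (LinearMap.range (ceDiff k g M (n + 1))) =
      (finrank k g).choose (n + 1) * finrank k M := by
  have ceB_le_ceZ : ceB k g M (n + 1) ≤ ceZ k g M (n + 1) := by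
    rw [ceB_succ_eq_range, ceZ_eq_ker, LinearMap.range_le_ker_iff]
    exact LinearMap.ext ceDiff_ceDiff
  have := finiteDimensional_alternatingMap k g M (n + 1)
  rw [← ceB_succ_eq_range, ← (Submodule.comapSubtypeEquivOfLe ceB_le_ceZ).finrank_eq,
    Submodule.finrank_quotient_add_finrank, ceZ_eq_ker, add_comm,
    LinearMap.finrank_range_add_finrank_ker, finrank_alternatingMap]

end Dimension

/-! ### Gaussian elimination over the field with three elements -/

/-- A vector over `𝔽₃`, stored as two bit masks: the `i`-th entry is `0` if the `i`-th bit of `supp`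
is unset, and otherwise `-1` or `1` according to whether the `i`-th bit of `sign` is set. Bits of
`sign` outside `supp` carry no information. -/
structure TritVec where
  supp : ℕ
  sign : ℕ

namespace TritVec

instance : Zero TritVec := ⟨⟨0, 0⟩⟩

instance : Add TritVec := ⟨fun v w =>
  ⟨(v.supp ||| w.supp) ^^^ (v.supp &&& w.supp &&& (v.sign ^^^ w.sign)),
    ((v.sign &&& v.supp) ||| (w.sign &&& w.supp)) ^^^ (v.supp &&& w.supp)⟩⟩

instance : Neg TritVec := ⟨fun v => ⟨v.supp, v.sign ^^^ v.supp⟩⟩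

/-- The `i`-th standard basis vector. -/
def single (i : ℕ) : TritVec := ⟨2 ^ i, 0⟩

/-- The index of the last nonzero entry, used as the pivot in the elimination. -/
def pivot (v : TritVec) : ℕ := v.supp.log2

/-- Add or subtract `p`, or do nothing, so as to make the entry of `v` at the pivot of `p`
vanish. -/
def clear (p v : TritVec) : TritVec :=
  bif v.supp.testBit p.pivot then
    bif (v.sign.testBit p.pivot).xor (p.sign.testBit p.pivot) then v + p else v + -p
  else v

/-- The result of clearing the entries of `v` at the pivots of the members of a list, in order. -/
def reduce : List TritVec → TritVec → TritVec
  | [], v => v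
  | p :: B, v =>
    -- The match makes the kernel evaluate each intermediate vector.
    match clear p v with
    | ⟨s, t⟩ => reduce B ⟨s, t⟩

/-- Gaussian elimination: the rank of `B ++ l`, for an echelon list `B`. -/
def rankAux : List TritVec → List TritVec → ℕ
  | B, [] => B.length
  | B, v :: l =>
    match reduce B v with
    | ⟨0, _⟩ => rankAux B l
    | ⟨s + 1, t⟩ => rankAux (B ++ [⟨s + 1, t⟩]) l

/-- Every member has a pivot, at which all later members vanish. -/
def IsEchelon : List TritVec → Prop
  | [] => True
  | p :: B => p.supp ≠ 0 ∧ (∀ q ∈ B, q.supp.testBit p.pivot = false) ∧ IsEchelon B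

lemma IsEchelon.concat {B : List TritVec} (hB : IsEchelon B) {v : TritVec} (hv : v.supp ≠ 0)
    (h : ∀ p ∈ B, v.supp.testBit p.pivot = false) : IsEchelon (B ++ [v]) := by
  induction B with
  | nil => exact ⟨hv, by simp, trivial⟩
  | cons p B ih =>
    obtain ⟨hp, hpB, hB⟩ := hB
    refine ⟨hp, ?_, ih hB fun q hq => h q (by simp [hq])⟩
    simpa [or_imp, forall_and] using ⟨hpB, h p (by simp)⟩

lemma reduce_cons (p : TritVec) (B : List TritVec) (v : TritVec) :
    reduce (p :: B) v = reduce B (clear p v) :=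
  rfl

lemma testBit_supp_add (v w : TritVec) (i : ℕ) : (v + w).supp.testBit i =
    ((v.supp.testBit i || w.supp.testBit i) ^^
      (v.supp.testBit i && w.supp.testBit i && (v.sign.testBit i ^^ w.sign.testBit i))) := by
  simp [HAdd.hAdd, Add.add]

lemma testBit_sign_add (v w : TritVec) (i : ℕ) : (v + w).sign.testBit i =
    ((v.sign.testBit i && v.supp.testBit i || w.sign.testBit i && w.supp.testBit i) ^^
      (v.supp.testBit i && w.supp.testBit i)) := by
  simp [HAdd.hAdd, Add.add]

lemma testBit_supp_neg (v : TritVec) (i : ℕ) : (-v).supp.testBit i = v.supp.testBit i :=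
  rfl

lemma testBit_sign_neg (v : TritVec) (i : ℕ) :
    (-v).sign.testBit i = (v.sign.testBit i ^^ v.supp.testBit i) :=
  Nat.testBit_xor ..

lemma testBit_supp_clear_pivot {p : TritVec} (hp : p.supp ≠ 0) (v : TritVec) :
    (clear p v).supp.testBit p.pivot = false := by
  have pivot_mem : p.supp.testBit p.pivot = true := Nat.testBit_log2 hp
  cases hv : v.supp.testBit p.pivot <;> cases hs : v.sign.testBit p.pivot <;>
    cases ht : p.sign.testBit p.pivot <;>
    simp [clear, testBit_supp_add, testBit_supp_neg, testBit_sign_neg, *]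

lemma testBit_supp_clear {p v : TritVec} {i : ℕ} (hp : p.supp.testBit i = false)
    (hv : v.supp.testBit i = false) : (clear p v).supp.testBit i = false := by
  simp only [clear, Bool.cond_eq_ite]
  split_ifs <;> simp [testBit_supp_add, testBit_supp_neg, hp, hv]

lemma testBit_supp_reduce {B : List TritVec} {v : TritVec} {i : ℕ}
    (hB : ∀ p ∈ B, p.supp.testBit i = false) (hv : v.supp.testBit i = false) :
    (reduce B v).supp.testBit i = false := by
  induction B generalizing v with
  | nil => exact hv
  | cons p B ih =>
    exact ih (fun q hq => hB q (List.mem_cons_of_mem p hq))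
      (testBit_supp_clear (hB p List.mem_cons_self) hv)

lemma IsEchelon.testBit_supp_reduce_pivot {B : List TritVec} (hB : IsEchelon B) (v : TritVec) :
    ∀ p ∈ B, (reduce B v).supp.testBit p.pivot = false := by
  induction B generalizing v with
  | nil => simp
  | cons p B ih =>
    obtain ⟨hp, hpB, hB⟩ := hB
    rw [reduce_cons]
    exact List.forall_mem_cons.mpr
      ⟨testBit_supp_reduce hpB (testBit_supp_clear_pivot hp v), ih hB (clear p v)⟩

section Vec

variable (k : Type*) [Field k]

/-- The vector over `k` represented by a `TritVec`. -/
def vec (v : TritVec) (i : ℕ) : k :=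
  bif v.supp.testBit i then bif v.sign.testBit i then -1 else 1 else 0

lemma vec_single (i : ℕ) : vec k (single i) = Pi.single i 1 := by
  funext j
  by_cases h : i = j <;> simp [vec, single, h, eq_comm]

lemma vec_zero : vec k 0 = 0 := by
  funext i
  simp [vec, show (0 : TritVec).supp = 0 from rfl]

lemma vec_neg (v : TritVec) : vec k (-v) = -vec k v := by
  funext i
  simp only [vec, testBit_supp_neg, testBit_sign_neg, Pi.neg_apply]
  cases v.supp.testBit i <;> cases v.sign.testBit i <;> simp

/-- The span of the vectors represented by a list. -/
def span (l : List TritVec) : Submodule k (ℕ → k) := Submodule.span k (vec k '' {v | v ∈ l})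

lemma span_append (l m : List TritVec) : span k (l ++ m) = span k l ⊔ span k m := by
  simp only [span, ← Submodule.span_union, ← Set.image_union]
  simp [Set.ofPred_or]

lemma span_singleton (v : TritVec) : span k [v] = k ∙ vec k v := by
  simp [span]

lemma span_cons (v : TritVec) (l : List TritVec) : span k (v :: l) = k ∙ vec k v ⊔ span k l := by
  rw [← List.singleton_append, span_append, span_singleton]

lemma finrank_span_cons {p : TritVec} {B : List TritVec} (hp : p.supp ≠ 0)
    (h : ∀ q ∈ B, q.supp.testBit p.pivot = false) :
    finrank k (span k (p :: B)) = finrank k (span k B) + 1 := by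
  have vanish : span k B ≤ LinearMap.ker (LinearMap.proj p.pivot) := by
    rw [span, Submodule.span_le]
    rintro _ ⟨q, hq, rfl⟩
    simp [vec, h q hq]
  have pivot_ne : vec k p p.pivot ≠ 0 := by
    simp only [vec, pivot, Nat.testBit_log2 hp, cond_true]
    cases p.sign.testBit p.supp.log2 <;> simp
  have not_mem : vec k p ∉ span k B := fun hmem => pivot_ne (vanish hmem)
  have : FiniteDimensional k (span k B) :=
    .span_of_finite k ((List.finite_toSet B).image _)
  have dim := Submodule.finrank_sup_add_finrank_inf_eq (k ∙ vec k p) (span k B)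
  rwa [(Submodule.disjoint_span_singleton_of_notMem not_mem).symm.eq_bot, finrank_bot, add_zero,
    finrank_span_singleton fun h => pivot_ne (congrFun h _), add_comm 1, ← span_cons] at dim

lemma finrank_span_of_isEchelon {B : List TritVec} (hB : IsEchelon B) :
    finrank k (span k B) = B.length := by
  induction B with
  | nil =>
    have : span k [] = ⊥ := Submodule.span_eq_bot.mpr (by rintro _ ⟨_, ⟨⟩, -⟩)
    rw [this, finrank_bot, List.length_nil]
  | cons p B ih => rw [finrank_span_cons k hB.1 hB.2.1, ih hB.2.2, List.length_cons]

variable [CharP k 3]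

lemma vec_add (v w : TritVec) : vec k (v + w) = vec k v + vec k w := by
  have three : (3 : k) = 0 := CharP.ofNat_eq_zero k 3
  have h1 : (1 : k) + 1 = -1 := by linear_combination three
  have h2 : (-1 : k) + -1 = 1 := by linear_combination -three
  funext i
  simp only [vec, testBit_supp_add, testBit_sign_add, Pi.add_apply]
  cases v.supp.testBit i <;> cases v.sign.testBit i <;> cases w.supp.testBit i <;>
    cases w.sign.testBit i <;> simp [h1, h2]

lemma vec_clear_sub_mem (p v : TritVec) : vec k (clear p v) - vec k v ∈ k ∙ vec k p := by
  have mem : vec k p ∈ k ∙ vec k p := Submodule.mem_span_singleton_self _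
  simp only [clear, Bool.cond_eq_ite]
  split_ifs <;> simp [vec_add, vec_neg, mem]

lemma vec_reduce_sub_mem (B : List TritVec) (v : TritVec) :
    vec k (reduce B v) - vec k v ∈ span k B := by
  induction B generalizing v with
  | nil => simp [reduce]
  | cons p B ih =>
    rw [reduce_cons, ← sub_add_sub_cancel _ (vec k (clear p v)), span_cons, sup_comm]
    exact Submodule.add_mem_sup (ih _) (vec_clear_sub_mem k p v)

lemma span_concat_reduce (B : List TritVec) (v : TritVec) :
    span k (B ++ [reduce B v]) = span k (B ++ [v]) := by
  have le {x y : ℕ → k} (h : x - y ∈ span k B) : k ∙ x ≤ span k B ⊔ k ∙ y := by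
    rw [Submodule.span_singleton_le_iff_mem, ← sub_add_cancel x y]
    exact Submodule.add_mem_sup h (Submodule.mem_span_singleton_self y)
  have h := vec_reduce_sub_mem k B v
  simp only [span_append, span_singleton]
  exact le_antisymm (sup_le le_sup_left (le h))
    (sup_le le_sup_left (le (by simpa using (span k B).neg_mem h)))

lemma rankAux_eq_finrank {B : List TritVec} (hB : IsEchelon B) (l : List TritVec) :
    rankAux B l = finrank k (span k (B ++ l)) := by
  induction l generalizing B with
  | nil => rw [rankAux, List.append_nil, finrank_span_of_isEchelon k hB]
  | cons v l ih =>
    have span_eq : span k (B ++ v :: l) = span k (B ++ [reduce B v]) ⊔ span k l := by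
      rw [span_concat_reduce, ← span_append, List.append_assoc, List.singleton_append]
    have hv := hB.testBit_supp_reduce_pivot v
    rw [rankAux, span_eq]
    generalize reduce B v = w at hv
    obtain ⟨_ | s, t⟩ := w
    · have vec_eq_zero : vec k ⟨0, t⟩ = 0 := by ext; simp [vec]
      rw [ih hB, span_append, span_append, span_singleton, vec_eq_zero,
        Submodule.span_zero_singleton, sup_bot_eq]
    · rw [← span_append]
      exact ih (hB.concat (Nat.succ_ne_zero s) hv)

end Vec

end TritVec

/-! ### The differential in coordinates -/

section Words

variable {R S : Type*} [Zero R] [Add R] [Neg R] [Zero S] [Add S] [Neg S] {r q : ℕ}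

/-- Maps that preserve `0`, addition and negation, between types that need not satisfy any laws. -/
structure IsNegAddHom (f : R → S) : Prop where
  map_zero : f 0 = 0
  map_add : ∀ x y, f (x + y) = f x + f y
  map_neg : ∀ x, f (-x) = -f x

lemma isNegAddHom {A B F : Type*} [AddGroup A] [AddGroup B] [FunLike F A B]
    [AddMonoidHomClass F A B] (f : F) : IsNegAddHom f :=
  ⟨map_zero f, map_add f, map_neg f⟩

/-- The action of the signs `0`, `1`, `-1` by scalar multiplication. -/
def signScale : SignType → R → R
  | 0, _ => 0
  | 1, x => x
  | -1, x => -x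

/-- The linear combination of `x` with coefficients in `{0, 1, -1}`. -/
def signSum (s : Fin r → SignType) (x : Fin r → R) : R :=
  ((List.finRange r).map fun d => signScale (s d) (x d)).sum

lemma IsNegAddHom.map_signSum {f : R → S} (hf : IsNegAddHom f) (s : Fin r → SignType)
    (x : Fin r → R) : f (signSum s x) = signSum s fun d => f (x d) := by
  have map_signScale (t : SignType) (y : R) : f (signScale t y) = signScale t (f y) := by
    cases t
    exacts [hf.map_zero, hf.map_neg y, rfl]
  rw [signSum, signSum]
  induction List.finRange r with
  | nil => exact hf.map_zero
  | cons d l ih => simp [hf.map_add, map_signScale, ih]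

lemma signSum_eq_sum {k A : Type*} [Ring k] [AddCommGroup A] [Module k A]
    (s : Fin r → SignType) (x : Fin r → A) : signSum s x = ∑ d, (s d : k) • x d := by
  have signScale_eq_smul (t : SignType) (y : A) : signScale t y = (t : k) • y := by
    cases t <;> simp [signScale]
  simp only [signSum, signScale_eq_smul]
  exact (Fin.sum_univ_def _).symm

/-- For an alternating `X` and an increasing word `l`, the value `X (a :: l)` expressed in terms of
the values of `X` at increasing words. -/
def straightenCons : (List (Fin r) → R) → Fin r → List (Fin r) → R
  | X, a, [] => X [a]
  | X, a, b :: l =>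
    if a < b then X (a :: b :: l)
    else if a = b then 0
    else -straightenCons (fun w => X (b :: w)) a l

/-- For an alternating `X`, the value `X l` expressed in terms of the values of `X` at increasing
words. -/
def straighten : (List (Fin r) → R) → List (Fin r) → R
  | X, [] => X []
  | X, a :: l => straighten (fun w => straightenCons X a w) l

lemma IsNegAddHom.map_straightenCons {f : R → S} (hf : IsNegAddHom f) {X : List (Fin r) → R}
    {Y : List (Fin r) → S} {a : Fin r} {l : List (Fin r)} (hl : l.Pairwise (· < ·))
    (h : ∀ w : List (Fin r), w.Pairwise (· < ·) → w.Perm (a :: l) → f (X w) = Y w) :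
    f (straightenCons X a l) = straightenCons Y a l := by
  induction l generalizing X Y with
  | nil => exact h [a] (List.pairwise_singleton _ _) .rfl
  | cons b l ih =>
    obtain ⟨hb, hl'⟩ := List.pairwise_cons.mp hl
    rw [straightenCons, straightenCons]
    split_ifs with hab hab'
    · refine h _ (hl.cons ?_) .rfl
      exact List.forall_mem_cons.mpr ⟨hab, fun d hd => hab.trans (hb d hd)⟩
    · exact hf.map_zero
    · have hba : b < a := lt_of_le_of_ne (not_lt.mp hab) (Ne.symm hab')
      rw [hf.map_neg, ih hl' fun w hw hwl => ?_]
      refine h _ (hw.cons fun d hd => ?_) ((hwl.cons b).trans (.swap a b l))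
      exact (List.forall_mem_cons.mpr ⟨hba, hb⟩) d (hwl.mem_iff.mp hd)

lemma IsNegAddHom.map_straighten {f : R → S} (hf : IsNegAddHom f) {X : List (Fin r) → R}
    {Y : List (Fin r) → S} {l : List (Fin r)}
    (h : ∀ w : List (Fin r), w.Pairwise (· < ·) → w.length = l.length → f (X w) = Y w) :
    f (straighten X l) = straighten Y l := by
  induction l generalizing X Y with
  | nil => exact h [] .nil rfl
  | cons a l ih =>
    refine ih fun w hw hwl => hf.map_straightenCons hw fun w' hw' hwl' => h w' hw' ?_
    rw [hwl'.length_eq, List.length_cons, hwl, List.length_cons]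

/-- The sum of the values of `X` at the words obtained from a word by replacing one letter `b` by
`∑ d, c a b d • d`, that is, by letting `a` act as a derivation. -/
def adSum (c : Fin r → Fin r → Fin r → SignType) (a : Fin r) :
    (List (Fin r) → R) → List (Fin r) → R
  | _, [] => 0
  | X, b :: l => signSum (c a b) (fun d => X (d :: l)) + adSum c a (fun w => X (b :: w)) l

/-- The Chevalley–Eilenberg differential in coordinates, computed recursively by Cartan's formula:
`X w j` is the `j`-th coordinate of the value of a cochain at the basis vectors listed in `w`, and
`c` and `ρ` are the structure constants of the Lie algebra and of the module. -/
def wordDiff (c : Fin r → Fin r → Fin r → SignType) (ρ : Fin r → Fin q → Fin q → SignType) :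
    (List (Fin r) → Fin q → R) → List (Fin r) → Fin q → R
  | _, [], _ => 0
  | X, a :: l, i =>
    signSum (fun j => ρ a j i) (X l) + -adSum c a (fun w => X w i) l +
      -wordDiff c ρ (fun w => X (a :: w)) l i

lemma IsNegAddHom.map_adSum {f : R → S} (hf : IsNegAddHom f)
    (c : Fin r → Fin r → Fin r → SignType) (a : Fin r) {X : List (Fin r) → R}
    {Y : List (Fin r) → S} {l : List (Fin r)}
    (h : ∀ w : List (Fin r), w.length = l.length → f (X w) = Y w) :
    f (adSum c a X l) = adSum c a Y l := by
  induction l generalizing X Y with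
  | nil => exact hf.map_zero
  | cons b l ih =>
    rw [adSum, adSum, hf.map_add, hf.map_signSum, ih fun w hw => h (b :: w) (congrArg (· + 1) hw)]
    congr 2
    exact funext fun d => h (d :: l) rfl

lemma IsNegAddHom.map_wordDiff {f : R → S} (hf : IsNegAddHom f)
    (c : Fin r → Fin r → Fin r → SignType) (ρ : Fin r → Fin q → Fin q → SignType)
    {X : List (Fin r) → Fin q → R} {Y : List (Fin r) → Fin q → S} {l : List (Fin r)} (i : Fin q)
    (h : ∀ w : List (Fin r), w.length + 1 = l.length → ∀ j, f (X w j) = Y w j) :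
    f (wordDiff c ρ X l i) = wordDiff c ρ Y l i := by
  induction l generalizing X Y with
  | nil => exact hf.map_zero
  | cons a l ih =>
    have map_signSum : f (signSum (fun j => ρ a j i) (X l)) = signSum (fun j => ρ a j i) (Y l) := by
      rw [hf.map_signSum]
      exact congrArg _ (funext (h l rfl))
    rw [wordDiff, wordDiff, hf.map_add, hf.map_add, hf.map_neg, hf.map_neg, map_signSum,
      hf.map_adSum c a fun w hw => h w (congrArg (· + 1) hw) i,
      ih fun w hw => h (a :: w) (congrArg (· + 1) hw)]

/-- A position for the pair of an index `j` and a word `l`, injective on words of a given length. -/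
def key (j : Fin q) : List (Fin r) → ℕ
  | [] => j
  | a :: l => a + r * key j l

lemma key_inj {i j : Fin q} {l m : List (Fin r)} (hlm : l.length = m.length)
    (h : key i l = key j m) : l = m ∧ i = j := by
  induction l generalizing m with
  | nil =>
    obtain rfl := List.length_eq_zero_iff.mp hlm.symm
    exact ⟨rfl, Fin.ext h⟩
  | cons a l ih =>
    obtain _ | ⟨b, m⟩ := m
    · cases hlm
    · have hab : a = b := Fin.ext <| by
        simpa [key, Nat.mod_eq_of_lt a.isLt, Nat.mod_eq_of_lt b.isLt] using congrArg (· % r) h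
      subst hab
      have key_eq : key i l = key j m :=
        Nat.eq_of_mul_eq_mul_left a.pos (Nat.add_left_cancel h)
      simpa using ih (Nat.succ_injective hlm) key_eq

/-- The increasing words of a given length. -/
def words (r n : ℕ) : List (List (Fin r)) := (List.finRange r).sublistsLen n

lemma mem_words {n : ℕ} {l : List (Fin r)} :
    l ∈ words r n ↔ l.Pairwise (· < ·) ∧ l.length = n := by
  rw [words, List.mem_sublistsLen]
  refine and_congr_left fun _ => ⟨fun h => (List.pairwise_lt_finRange r).sublist h,
    fun hl => ?_⟩
  exact List.sublist_of_subperm_of_pairwise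
    (List.subperm_of_subset hl.nodup fun a _ => List.mem_finRange a) hl
    (List.pairwise_lt_finRange r)

lemma card_words (r n : ℕ) : (words r n).toFinset.card = r.choose n := by
  rw [List.toFinset_card_of_nodup ?_, words, List.length_sublistsLen, List.length_finRange]
  exact List.nodup_sublistsLen n (List.nodup_finRange r)

/-- The matrix of the Chevalley–Eilenberg differential on cochains of degree `n`, as a list of
rows. -/
def diffRows (c : Fin r → Fin r → Fin r → SignType) (ρ : Fin r → Fin q → Fin q → SignType)
    (n : ℕ) : List TritVec :=
  (words r (n + 1)).flatMap fun l => (List.finRange q).map fun i =>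
    wordDiff c ρ (fun w j => straighten (fun w => TritVec.single (key j w)) w) l i

end Words

section Coordinates

variable {k g M : Type*} [Field k] [LieRing g] [LieAlgebra k g] [AddCommGroup M] [Module k M]
  {r q : ℕ} {n : ℕ} (e : Basis (Fin r) k g) (m : Basis (Fin q) k M)

/-- Evaluation of `n`-cochains at the basis vectors listed in a word (with value `0` on words of
length other than `n`). -/
noncomputable def evalWord : (n : ℕ) → List (Fin r) → (g [⋀^Fin n]→ₗ[k] M) →ₗ[k] M
  | 0, [] => AlternatingMap.constLinearEquivOfIsEmpty.symm.toLinearMap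
  | n + 1, a :: l => evalWord n l ∘ₗ AlternatingMap.curryLeftLinearMap.flip (e a)
  | _, _ => 0

variable {e}

lemma evalWord_nil (ψ : g [⋀^Fin 0]→ₗ[k] M) : evalWord e 0 [] ψ = ψ 0 :=
  rfl

lemma evalWord_cons {n : ℕ} (ψ : g [⋀^Fin (n + 1)]→ₗ[k] M) (a : Fin r) (l : List (Fin r)) :
    evalWord e (n + 1) (a :: l) ψ = evalWord e n l (ψ.curryLeft (e a)) :=
  rfl

lemma eq_zero_of_evalWord_eq_zero {n : ℕ} {ψ : g [⋀^Fin n]→ₗ[k] M}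
    (h : ∀ l : List (Fin r), l.length = n → evalWord e n l ψ = 0) : ψ = 0 := by
  induction n with
  | zero =>
    ext v
    rw [Subsingleton.elim v 0, ← evalWord_nil (e := e), h [] rfl, AlternatingMap.zero_apply]
  | succ n ih =>
    have curryLeft_eq_zero : ψ.curryLeft = 0 :=
      e.ext fun a => ih fun l hl => h (a :: l) (congrArg (· + 1) hl)
    exact ext_curryLeft fun x => congr($curryLeft_eq_zero x)

lemma evalWord_swap {n : ℕ} (ψ : g [⋀^Fin (n + 2)]→ₗ[k] M) (a b : Fin r) (l : List (Fin r)) :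
    evalWord e (n + 2) (a :: b :: l) ψ = -evalWord e (n + 2) (b :: a :: l) ψ := by
  have swap : (ψ.curryLeft (e a)).curryLeft (e b) = -(ψ.curryLeft (e b)).curryLeft (e a) := by
    ext v
    exact map_cons_cons_swap ψ (e b) (e a) v
  simp only [evalWord_cons, swap, map_neg]

lemma straightenCons_evalWord {n : ℕ} (ψ : g [⋀^Fin (n + 1)]→ₗ[k] M) (a : Fin r)
    {l : List (Fin r)} (hl : l.length = n) :
    straightenCons (fun w => evalWord e (n + 1) w ψ) a l = evalWord e (n + 1) (a :: l) ψ := by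
  induction l generalizing n with
  | nil => rfl
  | cons b l ih =>
    obtain _ | n := n
    · cases hl
    rw [straightenCons]
    split_ifs with hab hab'
    · rfl
    · subst hab'
      simp only [evalWord_cons, AlternatingMap.curryLeft_same, map_zero]
    · rw [evalWord_swap, evalWord_cons, ← ih (ψ.curryLeft (e b)) (Nat.succ.inj hl)]
      rfl

lemma straighten_evalWord {n : ℕ} (ψ : g [⋀^Fin n]→ₗ[k] M) {l : List (Fin r)}
    (hl : l.length = n) : straighten (fun w => evalWord e n w ψ) l = evalWord e n l ψ := by
  induction l generalizing n with
  | nil => rfl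
  | cons a l ih =>
    obtain _ | n := n
    · cases hl
    rw [straighten, evalWord_cons, ← ih (ψ.curryLeft (e a)) (Nat.succ.inj hl)]
    exact (isNegAddHom (AddMonoidHom.id M)).map_straighten fun w _ hwl =>
      straightenCons_evalWord ψ a (hwl.trans (Nat.succ.inj hl))

variable (e)

/-- The linear form sending an `n`-cochain to the `j`-th coordinate of its value at the basis
vectors listed in a word. -/
noncomputable def wordCoord (n : ℕ) (l : List (Fin r)) (j : Fin q) :
    Dual k (g [⋀^Fin n]→ₗ[k] M) :=
  m.coord j ∘ₗ evalWord e n l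

variable {e m}

lemma straighten_wordCoord {n : ℕ} {l : List (Fin r)} (hl : l.length = n) (j : Fin q) :
    straighten (fun w => wordCoord e m n w j) l = wordCoord e m n l j := by
  ext ψ
  calc straighten (fun w => wordCoord e m n w j) l ψ
      = straighten (fun w => wordCoord e m n w j ψ) l :=
        (isNegAddHom (LinearMap.applyₗ ψ)).map_straighten fun _ _ _ => rfl
    _ = m.coord j (straighten (fun w => evalWord e n w ψ) l) :=
        ((isNegAddHom (m.coord j)).map_straighten fun _ _ _ => rfl).symm
    _ = wordCoord e m n l j ψ := by rw [straighten_evalWord ψ hl]; rfl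

lemma eq_of_evalWord_eq {n : ℕ} {ψ φ : g [⋀^Fin n]→ₗ[k] M}
    (h : ∀ w ∈ words r n, evalWord e n w ψ = evalWord e n w φ) : ψ = φ := by
  rw [← sub_eq_zero]
  refine eq_zero_of_evalWord_eq_zero (e := e) fun l hl => ?_
  rw [map_sub, sub_eq_zero, ← straighten_evalWord ψ hl, ← straighten_evalWord φ hl]
  exact (isNegAddHom (AddMonoidHom.id M)).map_straighten fun w hw hwl =>
    h w (mem_words.mpr ⟨hw, hwl.trans hl⟩)

variable (e m)

lemma span_range_wordCoord (n : ℕ) [FiniteDimensional k (g [⋀^Fin n]→ₗ[k] M)] :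
    Submodule.span k
      (Set.range fun p : (words r n).toFinset × Fin q => wordCoord e m n p.1 p.2) = ⊤ := by
  rw [← Subspace.dualCoannihilator_dualAnnihilator_eq (W := Submodule.span k _),
    ← Submodule.dualAnnihilator_bot]
  congr 1
  refine (Submodule.eq_bot_iff _).mpr fun ψ hψ => eq_of_evalWord_eq (e := e) fun w hw => ?_
  refine m.ext_elem fun j => ?_
  rw [map_zero, map_zero]
  exact (Submodule.mem_dualCoannihilator _).mp hψ _
    (Submodule.subset_span ⟨(⟨w, List.mem_toFinset.mpr hw⟩, j), rfl⟩)

/-- The linear forms `wordCoord e m n w j` with `w` increasing, as a basis of the dual of the space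
of `n`-cochains. -/
noncomputable def wordCoordBasis (n : ℕ) [FiniteDimensional k (g [⋀^Fin n]→ₗ[k] M)] :
    Basis ((words r n).toFinset × Fin q) k (Dual k (g [⋀^Fin n]→ₗ[k] M)) :=
  basisOfTopLeSpanOfCardEqFinrank (fun p => wordCoord e m n p.1 p.2)
    (span_range_wordCoord e m n).ge (by
      have := Module.Finite.of_basis e
      have := Module.Finite.of_basis m
      rw [Fintype.card_prod, Fintype.card_coe, card_words, Fintype.card_fin,
        Subspace.dual_finrank_eq, finrank_alternatingMap, finrank_eq_card_basis e,
        finrank_eq_card_basis m, Fintype.card_fin, Fintype.card_fin])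

lemma exists_injective_wordCoord (n : ℕ) :
    ∃ J : Dual k (g [⋀^Fin n]→ₗ[k] M) →ₗ[k] ℕ → k, Injective J ∧
      ∀ w ∈ words r n, ∀ j, J (wordCoord e m n w j) = Pi.single (key j w) 1 := by
  have := Module.Finite.of_basis e
  have := Module.Finite.of_basis m
  have := finiteDimensional_alternatingMap k g M n
  have key_injective : Injective fun p : (words r n).toFinset × Fin q => key p.2 p.1.1 := by
    rintro ⟨⟨l, hl⟩, i⟩ ⟨⟨l', hl'⟩, j⟩ h
    rw [List.mem_toFinset, mem_words] at hl hl'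
    obtain ⟨rfl, rfl⟩ := key_inj (hl.2.trans hl'.2.symm) h
    rfl
  have independent : LinearIndependent k fun p : (words r n).toFinset × Fin q =>
      (Pi.single (key p.2 p.1.1) 1 : ℕ → k) :=
    (Pi.linearIndependent_single_one ℕ k).comp _ key_injective
  let b := wordCoordBasis e m n
  refine ⟨Finsupp.linearCombination k _ ∘ₗ b.repr.toLinearMap,
    Injective.comp (g := Finsupp.linearCombination k _) independent b.repr.injective,
    fun w hw j => ?_⟩
  have b_apply : b (⟨w, List.mem_toFinset.mpr hw⟩, j) = wordCoord e m n w j := by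
    simp [b, wordCoordBasis]
  simp [← b_apply]

variable {e m} [LieRingModule g M] [LieModule k g M]
  {c : Fin r → Fin r → Fin r → SignType} {ρ : Fin r → Fin q → Fin q → SignType}

lemma evalWord_lie (hc : ∀ a b, ⁅e a, e b⁆ = ∑ d, (c a b d : k) • e d) {n : ℕ} (a : Fin r)
    (ψ : g [⋀^Fin n]→ₗ[k] M) {l : List (Fin r)} (hl : l.length = n) :
    evalWord e n l ⁅e a, ψ⁆ =
      ⁅e a, evalWord e n l ψ⁆ - adSum c a (fun w => evalWord e n w ψ) l := by
  induction l generalizing n with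
  | nil =>
    obtain rfl : 0 = n := hl
    rw [adSum, sub_zero, evalWord_nil, evalWord_nil, altLie_apply, Finset.univ_eq_empty,
      Finset.sum_empty, sub_zero]
  | cons b l ih =>
    obtain _ | n := n
    · cases hl
    have replace_head : evalWord e n l (ψ.curryLeft ⁅e a, e b⁆) =
        signSum (c a b) fun d => evalWord e (n + 1) (d :: l) ψ := by
      simp only [hc, map_sum, map_smul, signSum_eq_sum (k := k), evalWord_cons]
    rw [adSum, evalWord_cons, curryLeft_lie, map_sub, ih _ (Nat.succ.inj hl), replace_head,
      sub_sub, add_comm]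
    rfl

lemma wordCoord_lie (hc : ∀ a b, ⁅e a, e b⁆ = ∑ d, (c a b d : k) • e d)
    (hρ : ∀ a j, ⁅e a, m j⁆ = ∑ i, (ρ a j i : k) • m i) {n : ℕ} (a : Fin r)
    (ψ : g [⋀^Fin n]→ₗ[k] M) {l : List (Fin r)} (hl : l.length = n) (i : Fin q) :
    wordCoord e m n l i ⁅e a, ψ⁆ =
      signSum (fun j => ρ a j i) (fun j => wordCoord e m n l j ψ) +
        -adSum c a (fun w => wordCoord e m n w i ψ) l := by
  have coord_lie (y : M) :
      m.coord i ⁅e a, y⁆ = signSum (fun j => ρ a j i) fun j => m.coord j y := by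
    conv_lhs => rw [← m.sum_repr y]
    simp [lie_sum, -Basis.sum_repr, signSum_eq_sum (k := k), hρ, Finsupp.single_apply, mul_comm]
  rw [wordCoord, LinearMap.comp_apply, evalWord_lie hc a ψ hl, map_sub, coord_lie, sub_eq_add_neg,
    (isNegAddHom (m.coord i)).map_adSum c a fun _ _ => rfl]
  rfl

lemma wordCoord_ceDiff (hc : ∀ a b, ⁅e a, e b⁆ = ∑ d, (c a b d : k) • e d)
    (hρ : ∀ a j, ⁅e a, m j⁆ = ∑ i, (ρ a j i : k) • m i) {n : ℕ} (ψ : g [⋀^Fin n]→ₗ[k] M)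
    {l : List (Fin r)} (hl : l.length = n + 1) (i : Fin q) :
    wordCoord e m (n + 1) l i (ceDiff k g M n ψ) =
      wordDiff c ρ (fun w j => wordCoord e m n w j ψ) l i := by
  induction n generalizing l with
  | zero =>
    obtain ⟨a, rfl⟩ := List.length_eq_one_iff.mp hl
    rw [wordDiff, wordDiff, ← wordCoord_lie hc hρ a ψ rfl, ← curryLeft_ceDiff_zero, neg_zero,
      add_zero]
    rfl
  | succ n ih =>
    obtain ⟨a, l, rfl⟩ := List.exists_of_length_succ l hl
    replace hl : l.length = n + 1 := Nat.succ.inj hl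
    have ih : wordCoord e m (n + 1) l i (ceDiff k g M n (ψ.curryLeft (e a))) =
        wordDiff c ρ (fun w j => wordCoord e m (n + 1) (a :: w) j ψ) l i :=
      ih (ψ.curryLeft (e a)) hl
    rw [wordDiff, ← wordCoord_lie hc hρ a ψ hl, ← ih, ← sub_eq_add_neg, ← map_sub,
      ← curryLeft_ceDiff]
    rfl

lemma dualMap_ceDiff_wordCoord (hc : ∀ a b, ⁅e a, e b⁆ = ∑ d, (c a b d : k) • e d)
    (hρ : ∀ a j, ⁅e a, m j⁆ = ∑ i, (ρ a j i : k) • m i) {n : ℕ} {l : List (Fin r)}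
    (hl : l.length = n + 1) (i : Fin q) :
    (ceDiff k g M n).dualMap (wordCoord e m (n + 1) l i) =
      wordDiff c ρ (wordCoord e m n) l i := by
  ext ψ
  rw [LinearMap.dualMap_apply, wordCoord_ceDiff hc hρ ψ hl]
  exact ((isNegAddHom (Dual.eval k _ ψ)).map_wordDiff c ρ (X := wordCoord e m n) i
    fun _ _ _ => rfl).symm

lemma map_dualMap_ceDiff_wordCoord [CharP k 3]
    (hc : ∀ a b, ⁅e a, e b⁆ = ∑ d, (c a b d : k) • e d)
    (hρ : ∀ a j, ⁅e a, m j⁆ = ∑ i, (ρ a j i : k) • m i) {n : ℕ}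
    {J : Dual k (g [⋀^Fin n]→ₗ[k] M) →ₗ[k] ℕ → k}
    (hJ : ∀ w ∈ words r n, ∀ j, J (wordCoord e m n w j) = Pi.single (key j w) 1)
    {l : List (Fin r)} (hl : l.length = n + 1) (i : Fin q) :
    J ((ceDiff k g M n).dualMap (wordCoord e m (n + 1) l i)) =
      TritVec.vec k
        (wordDiff c ρ (fun w j => straighten (fun w => TritVec.single (key j w)) w) l i) := by
  have vec_isNegAddHom : IsNegAddHom (TritVec.vec k) :=
    ⟨TritVec.vec_zero k, TritVec.vec_add k, TritVec.vec_neg k⟩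
  have map_wordCoord {w : List (Fin r)} (hw : w.length = n) (j : Fin q) :
      J (wordCoord e m n w j) =
        TritVec.vec k (straighten (fun w => TritVec.single (key j w)) w) := by
    rw [← straighten_wordCoord hw, vec_isNegAddHom.map_straighten fun _ _ _ =>
      TritVec.vec_single k _]
    exact (isNegAddHom J).map_straighten fun w' hw' hwl =>
      hJ w' (mem_words.mpr ⟨hw', hwl.trans hw⟩) j
  rw [dualMap_ceDiff_wordCoord hc hρ hl, vec_isNegAddHom.map_wordDiff c ρ i fun _ _ _ => rfl]
  exact (isNegAddHom J).map_wordDiff c ρ i fun w hw =>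
    map_wordCoord (Nat.succ.inj (hw.trans hl))

theorem finrank_range_ceDiff [CharP k 3]
    (hc : ∀ a b, ⁅e a, e b⁆ = ∑ d, (c a b d : k) • e d)
    (hρ : ∀ a j, ⁅e a, m j⁆ = ∑ i, (ρ a j i : k) • m i) (n : ℕ) :
    finrank k (LinearMap.range (ceDiff k g M n)) = TritVec.rankAux [] (diffRows c ρ n) := by
  have := Module.Finite.of_basis e
  have := Module.Finite.of_basis m
  have := finiteDimensional_alternatingMap k g M (n + 1)
  obtain ⟨J, J_injective, hJ⟩ := exists_injective_wordCoord e m n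
  have map_range : (LinearMap.range (ceDiff k g M n).dualMap).map J =
      TritVec.span k (diffRows c ρ n) := by
    rw [LinearMap.range_eq_map, ← span_range_wordCoord e m (n + 1), Submodule.map_span,
      Submodule.map_span, TritVec.span]
    congr 1
    ext v
    suffices (∃ l ∈ words r (n + 1), ∃ i,
          J ((ceDiff k g M n).dualMap (wordCoord e m (n + 1) l i)) = v) ↔
        ∃ l ∈ words r (n + 1), ∃ i, TritVec.vec k (wordDiff c ρ
          (fun w j => straighten (fun w => TritVec.single (key j w)) w) l i) = v by
      simpa [diffRows]
    refine exists_congr fun l => and_congr_right fun hl => ?_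
    simp only [map_dualMap_ceDiff_wordCoord hc hρ hJ (mem_words.mp hl).2]
  rw [← LinearMap.finrank_range_dualMap_eq_finrank_range,
    (Submodule.equivMapOfInjective J J_injective _).finrank_eq, map_range,
    TritVec.rankAux_eq_finrank k (B := []) trivial, List.nil_append]

end Coordinates

/-! ### Structure constants of `sl₃` modulo its center -/

section QuotientBasis

variable {k V : Type*} [Field k] [AddCommGroup V] [Module k V] {q : ℕ}
  (e : Basis (Fin (q + 1)) k V) {W : Submodule k V}

lemma linearIndependent_mkQ_castSucc (hW : W = k ∙ e (Fin.last q)) :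
    LinearIndependent k fun i : Fin q => W.mkQ (e i.castSucc) := by
  refine (e.linearIndependent.comp _ (Fin.castSucc_injective q)).map ?_
  rw [Submodule.ker_mkQ, hW, ← Set.image_singleton, Set.range_comp]
  refine e.linearIndependent.disjoint_span_image (Set.disjoint_singleton_right.mpr ?_)
  rintro ⟨i, hi⟩
  exact i.castSucc_ne_last hi

lemma span_range_mkQ_castSucc (hW : e (Fin.last q) ∈ W) :
    Submodule.span k (Set.range fun i : Fin q => W.mkQ (e i.castSucc)) = ⊤ := by
  rw [eq_top_iff, ← W.range_mkQ, LinearMap.range_eq_map, ← e.span_eq, Submodule.map_span,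
    Submodule.span_le]
  rintro _ ⟨_, ⟨i, rfl⟩, rfl⟩
  cases i using Fin.lastCases with
  | last =>
    rw [Submodule.mkQ_apply, (Submodule.Quotient.mk_eq_zero W).mpr hW]
    exact zero_mem _
  | cast i => exact Submodule.subset_span ⟨i, rfl⟩

end QuotientBasis

lemma exists_basis_quotient {k g : Type*} [Field k] [LieRing g] [LieAlgebra k g] {q : ℕ}
    {e : Basis (Fin (q + 1)) k g} {c : Fin (q + 1) → Fin (q + 1) → Fin (q + 1) → SignType}
    (hc : ∀ a b, ⁅e a, e b⁆ = ∑ d, (c a b d : k) • e d) {I : LieIdeal k g}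
    (hI : I.toSubmodule = k ∙ e (Fin.last q)) :
    ∃ m : Basis (Fin q) k (g ⧸ I),
      ∀ a j, ⁅e a, m j⁆ = ∑ i : Fin q, (c a j.castSucc i.castSucc : k) • m i := by
  have last_mem : e (Fin.last q) ∈ I.toSubmodule := hI ▸ Submodule.mem_span_singleton_self _
  let m : Basis (Fin q) k (g ⧸ I) :=
    .mk (linearIndependent_mkQ_castSucc e hI) (span_range_mkQ_castSucc e last_mem).ge
  have m_apply (i : Fin q) : m i = LieSubmodule.Quotient.mk' I (e i.castSucc) :=
    Basis.mk_apply ..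
  have mk_last : LieSubmodule.Quotient.mk' I (e (Fin.last q)) = 0 :=
    (LieSubmodule.Quotient.mk_eq_zero ..).mpr last_mem
  refine ⟨m, fun a j => ?_⟩
  simp only [m_apply, ← LieModuleHom.map_lie, hc, Fin.sum_univ_castSucc, map_add, map_sum, map_smul,
    mk_last, smul_zero, add_zero]

section SpecialLinear

lemma mem_center_sl_iff {n R : Type*} [Fintype n] [DecidableEq n] [CommRing R]
    {A : LieAlgebra.SpecialLinear.sl n R} :
    A ∈ LieAlgebra.center R (LieAlgebra.SpecialLinear.sl n R) ↔
      A.val ∈ Set.range (Matrix.scalar n) := by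
  rw [LieModule.mem_maxTrivSubmodule]
  constructor
  · refine fun h => Matrix.mem_range_scalar_of_commute_single fun i j hij => ?_
    exact sub_eq_zero.mp (congrArg Subtype.val (h (LieAlgebra.SpecialLinear.single i j hij 1)))
  · rintro ⟨r, hr⟩ B
    refine Subtype.ext (sub_eq_zero.mpr ?_)
    rw [← hr]
    exact ((Matrix.scalar_commute r (Commute.all r) B.val).eq).symm

/-- The `3 × 3` matrix with the given coordinates with respect to the off-diagonal matrix units,
`diag(1, -1, 0)` and the identity. In characteristic `3` these form a basis of `sl₃`. -/
def sl3Matrix {R : Type*} [CommRing R] (x : Fin 8 → R) : Matrix (Fin 3) (Fin 3) R :=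
  !![x 6 + x 7, x 0, x 1; x 2, -x 6 + x 7, x 3; x 4, x 5, x 7]

/-- The inverse of `sl3Matrix` on traceless matrices in characteristic `3`. -/
def sl3Coord {R : Type*} [CommRing R] (A : Matrix (Fin 3) (Fin 3) R) : Fin 8 → R :=
  ![A 0 1, A 0 2, A 1 0, A 1 2, A 2 0, A 2 1, A 0 0 - A 2 2, A 2 2]

/-- The residue modulo `3` among `0`, `1`, `-1`. -/
def balancedMod3 (z : ℤ) : SignType :=
  if z % 3 = 0 then 0 else if z % 3 = 1 then 1 else -1

/-- The structure constants of `sl₃` modulo `3` in the basis underlying `sl3Matrix`. -/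
def sl3Struct (a b d : Fin 8) : SignType :=
  balancedMod3 (sl3Coord ⁅sl3Matrix (R := ℤ) (Pi.single a 1), sl3Matrix (Pi.single b 1)⁆ d)

/-- The structure constants of `sl₃` modulo its center in characteristic `3`, in the image of the
basis underlying `sl3Matrix`. -/
def sl3QuotStruct (a : Fin 8) (j i : Fin 7) : SignType :=
  sl3Struct a j.castSucc i.castSucc

lemma map_sl3Matrix {R S : Type*} [CommRing R] [CommRing S] (f : R →+* S) (x : Fin 8 → R) :
    f.mapMatrix (sl3Matrix x) = sl3Matrix (f ∘ x) := by
  ext i j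
  fin_cases i <;> fin_cases j <;> simp [sl3Matrix]

lemma sl3Coord_map {R S : Type*} [CommRing R] [CommRing S] (f : R →+* S)
    (A : Matrix (Fin 3) (Fin 3) R) (d : Fin 8) :
    sl3Coord (f.mapMatrix A) d = f (sl3Coord A d) := by
  fin_cases d <;> simp [sl3Coord]

variable (k : Type*) [Field k] [CharP k 3]

lemma cast_balancedMod3 (z : ℤ) : (balancedMod3 z : k) = z := by
  have three : (3 : k) = 0 := CharP.ofNat_eq_zero k 3
  have two : (2 : k) = -1 := by linear_combination three
  have residues : z % 3 = 0 ∨ z % 3 = 1 ∨ z % 3 = 2 := by lia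
  rcases residues with h | h | h <;>
    simp [CharP.intCast_eq_intCast_mod k 3 (a := z), balancedMod3, h, two]

/-- The coordinates on `sl₃` in characteristic `3`, whose last basis vector is the identity. -/
def sl3Equiv : sl3 k ≃ₗ[k] (Fin 8 → k) where
  toFun A := sl3Coord A.val
  invFun x := ⟨sl3Matrix x, by
    have three : (3 : k) = 0 := CharP.ofNat_eq_zero k 3
    change Matrix.trace (sl3Matrix x) = 0
    simp only [sl3Matrix, Matrix.trace_fin_three_of]
    linear_combination x 7 * three⟩
  map_add' A B := by
    funext d
    fin_cases d <;> simp [sl3Coord, add_sub_add_comm]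
  map_smul' c A := by
    funext d
    fin_cases d <;> simp [sl3Coord, mul_sub]
  left_inv A := by
    have three : (3 : k) = 0 := CharP.ofNat_eq_zero k 3
    have trace : A.val 0 0 + A.val 1 1 + A.val 2 2 = 0 :=
      (Matrix.trace_fin_three A.val).symm.trans A.2
    have middle : A.val 1 1 = -(A.val 0 0 - A.val 2 2) + A.val 2 2 := by
      linear_combination trace - A.val 2 2 * three
    ext i j
    fin_cases i <;> fin_cases j <;> simp [sl3Matrix, sl3Coord, middle]
  right_inv x := by
    funext d
    fin_cases d <;> simp [sl3Matrix, sl3Coord]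

/-- The basis of `sl₃` in characteristic `3` underlying `sl3Matrix`. -/
noncomputable def sl3Basis : Basis (Fin 8) k (sl3 k) :=
  .ofEquivFun (sl3Equiv k)

lemma coe_sl3Basis (a : Fin 8) : (sl3Basis k a).val = sl3Matrix (Pi.single a 1) := by
  rw [sl3Basis, Basis.coe_ofEquivFun]
  rfl

lemma lie_sl3Basis (a b : Fin 8) :
    ⁅sl3Basis k a, sl3Basis k b⁆ = ∑ d, (sl3Struct a b d : k) • sl3Basis k d := by
  have map_basis (a : Fin 8) : (Int.castRingHom k).mapMatrix (sl3Matrix (Pi.single a 1)) =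
      (sl3Basis k a).val := by
    rw [map_sl3Matrix, coe_sl3Basis]
    congr 1
    funext d
    simp [Pi.single_apply]
  rw [← (sl3Basis k).sum_repr ⁅_, _⁆]
  refine Finset.sum_congr rfl fun d _ => congrArg (· • sl3Basis k d) ?_
  rw [sl3Struct, cast_balancedMod3, ← eq_intCast (Int.castRingHom k), ← sl3Coord_map]
  simp only [Ring.lie_def, map_sub, map_mul, map_basis]
  rfl

lemma center_sl3_eq_span :
    (LieAlgebra.center k (sl3 k)).toSubmodule = k ∙ sl3Basis k (Fin.last 7) := by
  have coe_last : (sl3Basis k (Fin.last 7)).val = 1 := by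
    rw [coe_sl3Basis]
    ext i j
    fin_cases i <;> fin_cases j <;> simp [sl3Matrix]
  ext A
  rw [LieSubmodule.mem_toSubmodule, mem_center_sl_iff, Submodule.mem_span_singleton]
  refine exists_congr fun r => ?_
  rw [Subtype.ext_iff, Submodule.coe_smul, coe_last, Matrix.scalar_apply,
    Matrix.smul_one_eq_diagonal]

end SpecialLinear

set_option maxRecDepth 100000 in
lemma rankAux_diffRows_two :
    TritVec.rankAux [] (diffRows sl3Struct sl3QuotStruct 2) = 154 := by
  decide +kernel

set_option maxRecDepth 100000 in
lemma rankAux_diffRows_three :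
    TritVec.rankAux [] (diffRows sl3Struct sl3QuotStruct 3) = 230 := by
  decide +kernel

theorem H3_quotient_module_dim_general (k : Type*) [Field k] [CharP k 3] :
    finrank k (ceH k (sl3 k) (sl3ModCenter k) 3) = 8 := by
  obtain ⟨m, lie_m⟩ := exists_basis_quotient (lie_sl3Basis k) (center_sl3_eq_span k)
  have := Module.Finite.of_basis (sl3Basis k)
  have := Module.Finite.of_basis m
  have rank (n : ℕ) : finrank k (LinearMap.range (ceDiff k (sl3 k) (sl3ModCenter k) n)) =
      TritVec.rankAux [] (diffRows sl3Struct sl3QuotStruct n) :=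
    finrank_range_ceDiff (lie_sl3Basis k) lie_m n
  have dim := finrank_ceH_succ_add k (sl3 k) (sl3ModCenter k) 2
  rw [rank, rank, rankAux_diffRows_two, rankAux_diffRows_three, finrank_eq_card_basis (sl3Basis k),
    finrank_eq_card_basis m, Fintype.card_fin, Fintype.card_fin] at dim
  have choose_eq : Nat.choose 8 3 = 56 := rfl
  lia

theorem H3_quotient_module_dim (k : Type*) [Field k] [IsAlgClosed k] [CharP k 3] :
    Module.finrank k (ceH k (sl3 k) (sl3ModCenter k) 3) = 8 :=
  H3_quotient_module_dim_general k
end
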